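/- arXiv:1208.1788 — 7 statements merged into one kernel-verified Lean document; each statement's English description precedes it below -/
import Mathlib

section
/- There do not exist functions φ : ℕ^ℕ → IC and ψ : IC → ℕ^ℕ such that for every f ∈ ℕ^ℕ and every A ∈ IC, if φ(f) ∩ A is infinite then it is NOT the case that f(n) ≥ ψ(A)(n) for all but finitely many n. (In particular there is no Tukey morphism, Borel or otherwise, from the triple defining the almost disjointness number 𝔞 to the triple defining the bounding number 𝔟.) -/
open Filter

/-- `IC`: the infinite/co-infinite subsets of ℕ. -/
abbrev IC := {A : Set ℕ // A.Infinite ∧ (Aᶜ : Set ℕ).Infinite}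

/-!
A Tukey morphism carries dominating families to dominating families. For the relation defining 𝔞
a set and its complement already form one, since an infinite set cannot meet both in a finite set;
but two functions have a common upper bound, even pointwise, so they never form an unbounded family.
-/

section Dominating

variable {α β γ δ : Type*}

/-- `D` is dominating for the triple `(α, β, R)`: every challenge `a : α` is met by a response in
`D`. The least cardinality of such a `D` is the cardinal characteristic defined by the triple. -/
def IsDominating (R : α → β → Prop) (D : Set β) : Prop :=
  ∀ a, ∃ b ∈ D, R a b

/-- `(φ, ψ)` is a Tukey morphism from the triple `(α, β, R)` to the triple `(γ, δ, S)`. Challenges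
are pulled back by `φ` and responses are pushed forward by `ψ`, so the cardinal characteristic of
`S` is at most that of `R`. -/
def IsTukeyMorphism (R : α → β → Prop) (S : γ → δ → Prop) (φ : γ → α) (ψ : β → δ) : Prop :=
  ∀ c b, R (φ c) b → S c (ψ b)

theorem IsTukeyMorphism.isDominating_image {R : α → β → Prop} {S : γ → δ → Prop} {φ : γ → α}
    {ψ : β → δ} (h : IsTukeyMorphism R S φ ψ) {D : Set β} (hD : IsDominating R D) :
    IsDominating S (ψ '' D) := fun c =>
  let ⟨b, hb, hR⟩ := hD (φ c)
  ⟨ψ b, Set.mem_image_of_mem ψ hb, h c b hR⟩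

theorem not_isDominating_not_le_of_finite [Preorder α] [IsDirectedOrder α] [Nonempty α]
    {D : Set α} (hD : D.Finite) : ¬ IsDominating (fun a b : α => ¬ b ≤ a) D :=
  fun h => not_bddAbove_iff'.2 h hD.bddAbove

theorem isDominating_infinite_inter_of_finite_cover {p : Set α → Prop} {D : Set {A // p A}}
    (hD : D.Finite) (hcover : ⋃ A ∈ D, A.1 = Set.univ) :
    IsDominating (fun (B : {B : Set α // B.Infinite}) (A : {A // p A}) => (B.1 ∩ A.1).Infinite)
      D := by
  intro B
  by_contra! hfin
  have hB : B.1 = ⋃ A ∈ D, B.1 ∩ A.1 := by rw [← Set.inter_iUnion₂, hcover, Set.inter_univ]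
  exact B.2 (hB ▸ hD.biUnion hfin)

end Dominating

theorem exists_infinite_and_infinite_compl (α : Type*) [Infinite α] :
    ∃ A : Set α, A.Infinite ∧ Aᶜ.Infinite := by
  obtain ⟨A, B, hunion, hdisj, hcard⟩ :=
    (Set.infinite_univ (α := α)).exists_union_disjoint_cardinal_eq_of_infinite
  obtain ⟨e⟩ := Cardinal.eq.1 hcard
  have hiff : A.Infinite ↔ B.Infinite := by
    rw [← Set.infinite_coe_iff, ← Set.infinite_coe_iff, e.infinite_iff]
  have hor : A.Infinite ∨ B.Infinite := Set.infinite_union.1 (hunion ▸ Set.infinite_univ)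
  exact ⟨A, hor.elim id hiff.2, (hor.elim hiff.1 id).mono hdisj.subset_compl_left⟩

theorem stmt0_general {α P : Type*} [Infinite α] [Preorder P] [IsDirectedOrder P] :
    ¬ ∃ (φ : P → {B : Set α // B.Infinite}) (ψ : {A : Set α // A.Infinite ∧ Aᶜ.Infinite} → P),
      IsTukeyMorphism (fun B A => (B.1 ∩ A.1).Infinite) (fun f g => ¬ g ≤ f) φ ψ := by
  rintro ⟨φ, ψ, h⟩
  obtain ⟨A, hA, hA'⟩ := exists_infinite_and_infinite_compl α
  let A₀ : {A : Set α // A.Infinite ∧ Aᶜ.Infinite} := ⟨A, hA, hA'⟩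
  let A₁ : {A : Set α // A.Infinite ∧ Aᶜ.Infinite} := ⟨Aᶜ, hA', by rwa [compl_compl]⟩
  have hcover : ⋃ X ∈ ({A₀, A₁} : Set _), X.1 = Set.univ := by
    rw [Set.biUnion_pair, Set.union_compl_self]
  have hfin : ({A₀, A₁} : Set _).Finite := Set.toFinite _
  have : Nonempty P := ⟨ψ A₀⟩
  have hD := isDominating_infinite_inter_of_finite_cover hfin hcover
  exact not_isDominating_not_le_of_finite (hfin.image ψ) (h.isDominating_image hD)

/-- There is no (Tukey) morphism from the triple defining 𝔞 to the triple defining 𝔟: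
there are no maps `φ : ℕ^ℕ → IC` and `ψ : IC → ℕ^ℕ` such that
`φ(f) ∩ A` infinite implies `¬ (f ≥* ψ(A))`. -/
theorem stmt0 :
    ¬ ∃ (φ : (ℕ → ℕ) → IC) (ψ : IC → (ℕ → ℕ)),
      ∀ (f : ℕ → ℕ) (A : IC),
        ((φ f).1 ∩ A.1).Infinite → ¬ (∀ᶠ n in cofinite, ψ A n ≤ f n) :=
  fun ⟨φ, ψ, h⟩ => stmt0_general ⟨fun f => ⟨φ f, (φ f).2.1⟩, ψ,
    fun f A hinf hle => h f A hinf (.of_forall hle)⟩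
end

section
/- Suppose φ, ψ : [ω]^ω → [ω]^ω are maps satisfying: (a) the family ψ([ω]^ω) is centered, and (b) for all A, B ∈ [ω]^ω, if A ⊆* ψ(B) then B does not split φ(A). Then φ and ψ cannot both be Borel. (I.e., there is no Borel Tukey morphism from the splitting number 𝔰 to the pseudo-intersection number 𝔭.) -/
open Filter

/-- The subset of ℕ coded by an element of Cantor space. -/
def bset (x : ℕ → Bool) : Set ℕ := {n | x n = true}

/-- `[ω]^ω`, regarded as a subspace of Cantor space via characteristic functions. -/
abbrev InfC := {x : ℕ → Bool // (bset x).Infinite}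

/-- `A ⊆* B`: `A ∖ B` is finite. -/
def SubStar (A B : Set ℕ) : Prop := (A \ B).Finite

/-- `B` splits `A`: both `A ∩ B` and `A ∖ B` are infinite. -/
def SplitsSet (B A : Set ℕ) : Prop := (A ∩ B).Infinite ∧ (A \ B).Infinite

/-- A family of infinite sets is centered iff every nonempty finite subfamily
has infinite intersection. -/
def Centered (F : Set InfC) : Prop :=
  ∀ s : Finset InfC, ↑s ⊆ F → s.Nonempty → (⋂ x ∈ s, bset x.1).Infinite

/-! A Borel `ψ` is continuous on a dense `Gδ` set `⋂ l, U l` of Cantor space, and a generic `y`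
translates every eventually constant sequence into this set. For given `N` only finitely many
sequences are constant from `N` on, so centeredness yields arbitrarily large `a` lying in
`ψ (x ∆ y)` for all such `x`; by continuity, this is decided by `x` on a long enough finite
interval. Iterating gives a partition of `ℕ` into intervals and an infinite set `A` such that
`A ⊆ ψ (z ∆ y)` for *every* `z` that is constant on each interval. Since an infinite set meets
infinitely many of the intervals, such a `z` can be chosen so that `z ∆ y` splits `φ A`. -/

open scoped symmDiff Topology

lemma exists_mem_residual_continuousOn {X Y : Type*} [TopologicalSpace X] [TopologicalSpace Y]
    [SecondCountableTopology Y] {f : X → Y}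
    (hf : ∀ U, IsOpen U → BaireMeasurableSet (f ⁻¹' U)) :
    ∃ G ∈ residual X, ContinuousOn f G := by
  have hB := TopologicalSpace.isBasis_countableBasis Y
  choose! O hO hfO using fun U hU ↦ (hf U (hB.isOpen hU)).residualEq_isOpen
  have hG : ∀ᶠ x in residual X,
      ∀ U ∈ TopologicalSpace.countableBasis Y, x ∈ f ⁻¹' U ↔ x ∈ O U :=
    (eventually_countable_ball (TopologicalSpace.countable_countableBasis Y)).2
      fun U hU ↦ (hfO U hU).mem_iff
  refine ⟨_, hG, hB.continuousOn_iff.2 fun U hU ↦ ⟨O U, hO U hU, ?_⟩⟩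
  ext x
  exact and_congr_left fun hx ↦ hx U hU

lemma continuous_symmDiff_right {ι : Type*} (x : ι → Bool) : Continuous (x ∆ ·) :=
  continuous_pi fun i ↦
    (continuous_of_discreteTopology (f := (x i ∆ ·))).comp (continuous_apply i)

lemma continuous_symmDiff_left {ι : Type*} (y : ι → Bool) : Continuous (· ∆ y) := by
  simpa only [symmDiff_comm] using continuous_symmDiff_right y

lemma isOpenMap_symmDiff_right {ι : Type*} (x : ι → Bool) : IsOpenMap (x ∆ ·) :=
  IsOpenMap.of_inverse (f' := (x ∆ ·)) (continuous_symmDiff_right x)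
    (symmDiff_right_involutive x) (symmDiff_right_involutive x)

lemma exists_forall_symmDiff_mem {ι : Type*} {E G : Set (ι → Bool)} (hE : E.Countable)
    (hG : G ∈ residual (ι → Bool)) : ∃ y, ∀ x ∈ E, x ∆ y ∈ G := by
  have h : ∀ᶠ y in residual (ι → Bool), ∀ x ∈ E, x ∆ y ∈ G :=
    (eventually_countable_ball hE).2 fun x _ ↦ tendsto_residual_of_isOpenMap
      (continuous_symmDiff_right x) (isOpenMap_symmDiff_right x) hG
  exact (dense_of_mem_residual h).nonempty

lemma isOpen_setOf_apply_eq {ι α : Type*} [TopologicalSpace α] [DiscreteTopology α] (i : ι)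
    (c : α) : IsOpen {x : ι → α | x i = c} :=
  (isOpen_discrete {c}).preimage (continuous_apply (A := fun _ : ι ↦ α) i)

lemma isGδ_setOf_infinite_bset : IsGδ {x : ℕ → Bool | (bset x).Infinite} := by
  have h : {x : ℕ → Bool | (bset x).Infinite}
      = ⋂ n, ⋃ m ≥ n, {x : ℕ → Bool | x m = true} := by
    ext x
    simp only [bset, Set.mem_ofPred_eq, ← Nat.frequently_atTop_iff_infinite, frequently_atTop,
      Set.mem_iInter, Set.mem_iUnion, exists_prop]
  rw [h]
  exact .iInter_of_isOpen fun n ↦ isOpen_biUnion fun m _ ↦ isOpen_setOf_apply_eq m true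

lemma dense_setOf_infinite_bset : Dense {x : ℕ → Bool | (bset x).Infinite} := by
  intro x
  let approx (k n : ℕ) : Bool := if n < k then x n else true
  have happrox : Tendsto approx atTop (𝓝 x) := tendsto_pi_nhds.2 fun n ↦
    tendsto_const_nhds.congr' <| (eventually_gt_atTop n).mono fun k hk ↦ (if_pos hk).symm
  refine mem_closure_of_tendsto happrox (.of_forall fun k ↦ ?_)
  exact (Set.Ici_infinite k).mono fun n (hn : k ≤ n) ↦ if_neg hn.not_gt

lemma exists_isOpen_residual_mem_iff {ψ : InfC → InfC} (hψ : Measurable ψ) :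
    ∃ U O : ℕ → Set (ℕ → Bool), (∀ l, IsOpen (U l)) ∧ (∀ a, IsOpen (O a)) ∧
      (⋂ l, U l) ∈ residual (ℕ → Bool) ∧
      ∀ x ∈ ⋂ l, U l, ∃ h : (bset x).Infinite, ∀ a, x ∈ O a ↔ a ∈ bset (ψ ⟨x, h⟩).1 := by
  let Ψ : (ℕ → Bool) → ℕ → Bool := Function.extend Subtype.val (fun B ↦ (ψ B).1) id
  have hΨ : Measurable Ψ :=
    (MeasurableEmbedding.subtype_coe isGδ_setOf_infinite_bset.measurableSet).measurable_extend
      (measurable_subtype_coe.comp hψ) measurable_id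
  obtain ⟨G, hG, hΨG⟩ := exists_mem_residual_continuousOn fun W hW ↦
    (hΨ hW.measurableSet).baireMeasurableSet
  choose O hO hΨO using fun a ↦ continuousOn_iff'.1 hΨG {x | x a = true}
    (isOpen_setOf_apply_eq a true)
  obtain ⟨T, hT, hTδ, hTd⟩ := mem_residual.1 <|
    inter_mem hG (residual_of_dense_Gδ isGδ_setOf_infinite_bset dense_setOf_infinite_bset)
  obtain ⟨U, hU, rfl⟩ := hTδ.eq_iInter_nat
  refine ⟨U, O, hU, hO, residual_of_dense_Gδ hTδ hTd, fun x hx ↦ ⟨(hT hx).2, fun a ↦ ?_⟩⟩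
  have hΨx : Ψ x = (ψ ⟨x, (hT hx).2⟩).1 :=
    Subtype.val_injective.extend_apply _ _ (⟨x, (hT hx).2⟩ : InfC)
  have hxO : Ψ x a = true ↔ x ∈ O a := by
    simpa [(hT hx).1] using Set.ext_iff.1 (hΨO a) x
  rw [← hxO, hΨx]
  rfl

section Fusion

variable {α : Type*}

/-- The sequence that agrees with `z` up to index `N` and keeps the value `z N` from there on.
Its values over all `z` are the sequences constant from `N` on. -/
def freezeAt (N : ℕ) (z : ℕ → α) : ℕ → α := fun n ↦ z (min n N)

lemma finite_range_freezeAt [Finite α] (N : ℕ) :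
    (Set.range (freezeAt N : (ℕ → α) → ℕ → α)).Finite := by
  let extendByLast (u : Fin (N + 1) → α) (n : ℕ) : α := u ⟨min n N, by omega⟩
  refine (Set.finite_range extendByLast).subset ?_
  rintro _ ⟨z, rfl⟩
  exact ⟨fun i ↦ z i, rfl⟩

variable [TopologicalSpace α] [DiscreteTopology α]

lemma eventually_cylinder_subset {V : Set (ℕ → α)} (hV : IsOpen V) {x : ℕ → α} (hx : x ∈ V) :
    ∀ᶠ M in atTop, PiNat.cylinder x M ⊆ V := by
  obtain ⟨_, ⟨w, M, rfl⟩, hxM, hMV⟩ :=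
    (PiNat.isTopologicalBasis_cylinders fun _ : ℕ ↦ α).exists_subset_of_mem_open hx hV
  rw [← PiNat.mem_cylinder_iff_eq.1 hxM] at hMV
  exact (eventually_ge_atTop M).mono fun k hk ↦ (PiNat.cylinder_anti x hk).trans hMV

variable [Finite α]

lemma eventually_forall_mem_of_eqOn_Ico {V : Set (ℕ → α)} (hV : IsOpen V) {N : ℕ}
    (h : ∀ z, freezeAt N z ∈ V) :
    ∀ᶠ M in atTop, ∀ z : ℕ → α, (∀ n ∈ Set.Ico N M, z n = z N) → z ∈ V := by
  have hcyl : ∀ᶠ M in atTop, ∀ x ∈ Set.range (freezeAt N), PiNat.cylinder x M ⊆ V :=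
    (eventually_all_finite (finite_range_freezeAt N)).2 <| Set.forall_mem_range.2 fun z ↦
      eventually_cylinder_subset hV (h z)
  refine hcyl.mono fun M hM z hz ↦ hM _ ⟨z, rfl⟩ fun n hn ↦ ?_
  rcases le_total n N with hnN | hNn
  · rw [freezeAt, min_eq_left hnN]
  · rw [freezeAt, min_eq_right hNn, hz n ⟨hNn, hn⟩]

lemma exists_tendsto_forall_mem_Ico {N : ℕ → ℕ} (hN : StrictMono N) :
    ∃ f : ℕ → ℕ, Tendsto f atTop atTop ∧ ∀ l, ∀ n ∈ Set.Ico (N l) (N (l + 1)), f n = l := by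
  have le_index {l n : ℕ} (h : N l ≤ n) : l ≤ Nat.findGreatest (N · ≤ n) n :=
    Nat.le_findGreatest (hN.le_apply.trans h) h
  refine ⟨fun n ↦ Nat.findGreatest (N · ≤ n) n, tendsto_atTop.2 fun l ↦
    (eventually_ge_atTop (N l)).mono fun n ↦ le_index, fun l n ⟨hln, hnl⟩ ↦ ?_⟩
  refine le_antisymm (Nat.lt_succ_iff.1 (hN.lt_iff_lt.1 (lt_of_le_of_lt ?_ hnl))) (le_index hln)
  exact Nat.findGreatest_spec (P := (N · ≤ n)) (hN.le_apply.trans hln) hln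

theorem exists_fusion {V : ℕ → ℕ → Set (ℕ → α)} (hV : ∀ l a, IsOpen (V l a))
    (h : ∀ l N, ∃ᶠ a in atTop, ∀ z, freezeAt N z ∈ V l a) :
    ∃ f a : ℕ → ℕ, Tendsto f atTop atTop ∧ StrictMono a ∧
      ∀ (v : ℕ → α) (l : ℕ), v ∘ f ∈ V l (a l) := by
  have hstep (l N : ℕ) : ∃ a ≥ N, ∃ M > a,
      ∀ z : ℕ → α, (∀ n ∈ Set.Ico N M, z n = z N) → z ∈ V l a := by
    obtain ⟨a, hNa, ha⟩ := frequently_atTop.1 (h l N) N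
    obtain ⟨M, hM, haM⟩ :=
      ((eventually_forall_mem_of_eqOn_Ico (hV l a) ha).and (eventually_gt_atTop a)).exists
    exact ⟨a, hNa, M, haM, hM⟩
  choose a hNa M haM hM using hstep
  let N (l : ℕ) : ℕ := Nat.rec 0 M l
  have hN : StrictMono N := strictMono_nat_of_lt_succ fun l ↦ (hNa l (N l)).trans_lt (haM l (N l))
  obtain ⟨f, hf, hfN⟩ := exists_tendsto_forall_mem_Ico hN
  refine ⟨f, fun l ↦ a l (N l), hf, strictMono_nat_of_lt_succ fun l ↦
    (haM l (N l)).trans_le (hNa (l + 1) (N (l + 1))), fun v l ↦ hM l (N l) _ fun n hn ↦ ?_⟩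
  exact congrArg v <| (hfN l n hn).trans
    (hfN l (N l) ⟨le_rfl, hN l.lt_succ_self⟩).symm

end Fusion

lemma exists_splitsSet {X : Set ℕ} (hX : X.Infinite) : ∃ P, SplitsSet P X := by
  obtain ⟨P, Q, rfl, hPQ, hcard⟩ := hX.exists_union_disjoint_cardinal_eq_of_infinite
  have hiff : P.Infinite ↔ Q.Infinite := by
    simp only [← Set.infinite_coe_iff, Cardinal.infinite_iff, hcard]
  have hP : P.Infinite := (Set.infinite_union.1 hX).elim id hiff.2
  refine ⟨P, ?_, ?_⟩
  · rwa [Set.union_inter_cancel_left]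
  · rw [Set.union_sdiff_cancel_left hPQ.le_bot]
    exact hiff.1 hP

lemma exists_splitsSet_comp_symmDiff {f : ℕ → ℕ} (hf : Tendsto f atTop atTop) (y : ℕ → Bool)
    {X : Set ℕ} (hX : X.Infinite) :
    ∃ v : ℕ → Bool, SplitsSet (bset ((v ∘ f) ∆ y)) X := by
  classical
  have hfX : (f '' X).Infinite := Nat.frequently_atTop_iff_infinite.1 <| hf.frequently <|
    (Nat.frequently_atTop_iff_infinite.2 hX).mono fun _ ↦ Set.mem_image_of_mem f
  obtain ⟨P, hP, hP'⟩ := exists_splitsSet hfX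
  choose! r hrX hfr using fun l (hl : l ∈ f '' X) ↦ hl
  have hr : Set.InjOn r (f '' X) := Set.LeftInvOn.injOn hfr
  let v (l : ℕ) : Bool := decide (l ∈ P) ∆ y (r l)
  have hv {l : ℕ} (hl : l ∈ f '' X) : r l ∈ bset ((v ∘ f) ∆ y) ↔ l ∈ P := by
    simp [bset, v, hfr l hl]
  refine ⟨v, ?_, ?_⟩
  · refine (hP.image (hr.mono Set.inter_subset_left)).mono ?_
    rintro _ ⟨l, ⟨hl, hlP⟩, rfl⟩
    exact ⟨hrX l hl, (hv hl).2 hlP⟩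
  · refine (hP'.image (hr.mono Set.sdiff_subset)).mono ?_
    rintro _ ⟨l, ⟨hl, hlP⟩, rfl⟩
    exact ⟨hrX l hl, mt (hv hl).1 hlP⟩

lemma Centered.frequently_forall_mem_bset {F : Set InfC} (hF : Centered F) {ι : Type*} [Finite ι]
    {B : ι → InfC} (hB : ∀ i, B i ∈ F) : ∃ᶠ a in atTop, ∀ i, a ∈ bset (B i).1 := by
  obtain hι | hι := isEmpty_or_nonempty ι
  · exact Eventually.frequently (.of_forall fun _ ↦ hι.elim)
  · have hfin := Set.finite_range B
    have hinter : (⋂ x ∈ hfin.toFinset, bset x.1) = {a | ∀ i, a ∈ bset (B i).1} := by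
      ext a
      simp
    have hinf := hF hfin.toFinset (by simpa [Set.range_subset_iff] using hB)
      (by simpa using Set.range_nonempty B)
    rw [hinter] at hinf
    exact Nat.frequently_atTop_iff_infinite.2 hinf

lemma exists_forall_bset_subset {ψ : InfC → InfC} (hcen : Centered (Set.range ψ))
    (hψ : Measurable ψ) :
    ∃ (A : InfC) (f : ℕ → ℕ) (y : ℕ → Bool), Tendsto f atTop atTop ∧
      ∀ v : ℕ → Bool, ∃ h : (bset ((v ∘ f) ∆ y)).Infinite, bset A.1 ⊆ bset (ψ ⟨_, h⟩).1 := by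
  classical
  obtain ⟨U, O, hU, hO, hres, hUO⟩ := exists_isOpen_residual_mem_iff hψ
  choose hinf hψO using hUO
  obtain ⟨y, hy⟩ := exists_forall_symmDiff_mem
    (Set.countable_iUnion fun N ↦ (finite_range_freezeAt N).countable) hres
  let V (l a : ℕ) : Set (ℕ → Bool) := (· ∆ y) ⁻¹' (U l ∩ O a)
  have hV (l a : ℕ) : IsOpen (V l a) := ((hU l).inter (hO a)).preimage (continuous_symmDiff_left y)
  have hyU {N : ℕ} (x : Set.range (freezeAt N)) : x.1 ∆ y ∈ ⋂ l, U l :=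
    hy _ (Set.mem_iUnion_of_mem N x.2)
  have hfreq (l N : ℕ) : ∃ᶠ a in atTop, ∀ z, freezeAt N z ∈ V l a := by
    have := (finite_range_freezeAt (α := Bool) N).to_subtype
    let B (x : Set.range (freezeAt N)) : InfC := ψ ⟨x.1 ∆ y, hinf _ (hyU x)⟩
    refine (hcen.frequently_forall_mem_bset (B := B) fun x ↦ ⟨_, rfl⟩).mono fun a ha z ↦ ?_
    let x : Set.range (freezeAt N) := ⟨freezeAt N z, z, rfl⟩
    exact ⟨Set.mem_iInter.1 (hyU x) l, (hψO _ (hyU x) a).2 (ha x)⟩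
  obtain ⟨f, a, hf, ha, hfV⟩ := exists_fusion hV hfreq
  have hbset : bset (fun n ↦ decide (n ∈ Set.range a)) = Set.range a := by ext; simp [bset]
  refine ⟨⟨_, hbset ▸ Set.infinite_range_of_injective ha.injective⟩, f, y, hf, fun v ↦ ?_⟩
  have hvU : (v ∘ f) ∆ y ∈ ⋂ l, U l := Set.mem_iInter.2 fun l ↦ (hfV v l).1
  refine ⟨hinf _ hvU, hbset.trans_subset ?_⟩
  rintro _ ⟨l, rfl⟩
  exact (hψO _ hvU _).1 (hfV v l).2

theorem stmt2_general (φ ψ : InfC → InfC)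
    (hcen : Centered (Set.range ψ))
    (hmor : ∀ A B : InfC, SubStar (bset A.1) (bset (ψ B).1) →
      ¬ SplitsSet (bset B.1) (bset (φ A).1)) :
    ¬ Measurable ψ := by
  intro hψ
  obtain ⟨A, f, y, hf, hA⟩ := exists_forall_bset_subset hcen hψ
  obtain ⟨v, hv⟩ := exists_splitsSet_comp_symmDiff hf y (φ A).2
  obtain ⟨hinf, hsub⟩ := hA v
  have hstar : SubStar (bset A.1) (bset (ψ ⟨_, hinf⟩).1) := by
    rw [SubStar, Set.sdiff_eq_empty.2 hsub]
    exact Set.finite_empty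
  exact hmor A ⟨_, hinf⟩ hstar hv

/-- If `φ, ψ : [ω]^ω → [ω]^ω` satisfy (a) `ψ([ω]^ω)` is centered and
(b) `A ⊆* ψ(B)` implies `B` does not split `φ(A)`, then `φ` and `ψ` cannot
both be Borel.  (No Borel Tukey morphism from 𝔰 to 𝔭.) -/
theorem stmt2 (φ ψ : InfC → InfC)
    (hcen : Centered (Set.range ψ))
    (hmor : ∀ A B : InfC, SubStar (bset A.1) (bset (ψ B).1) →
      ¬ SplitsSet (bset B.1) (bset (φ A).1)) :
    ¬ (Measurable φ ∧ Measurable ψ) :=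
  fun h ↦ stmt2_general φ ψ hcen hmor h.2
end

section
/- There exist a continuous map ψ : ℕ^ℕ → [ω]^ω and a Borel map φ : [ω]^ω → ℕ^ℕ satisfying: (a) the family ψ(ℕ^ℕ) is centered, and (b) for every A ∈ [ω]^ω and every f ∈ ℕ^ℕ, if A ⊆* ψ(f) then f ≤* φ(A). (I.e., there is a Borel Tukey morphism witnessing 𝔟 ≥_BT 𝔭.) -/
open Filter

/-!
Replace `f : ℕ → ℕ` by a strictly increasing function above it and let `X` be the range of that
function. Order the finite sets of naturals by end-extension, and let `ψ f` consist of (the codes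
of) all pairs `(i, N)` where `N` is a finite antichain of subsets of `{0, …, i - 1}` containing
`X ∩ {0, …, i - 1}`. Finitely many distinct infinite sets have traces on `{0, …, i - 1}` that form
an antichain once `i` is large, so the range of `ψ` is centered.

Conversely, suppose almost all elements of an infinite set `A` of codes lie in `ψ f`, and let
`y < z` be consecutive elements of `X`. The trace `s` of `X` on `{0, …, y}` is properly end-extended
by the traces on `{0, …, i - 1}` for `i > z`, so the antichains `N` occurring in `A` at high levels
`i` omit `s`. But a large level `i` with `y < i ≤ z` still has trace `s`, which is then in `N`.
Hence `z` is at most the first level above `y` at which `A` omits `s`, and summing over the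
finitely many candidates for `s` gives a bound on `z` that depends only on `A` and `y`.
-/

open Topology

section TailDomination

theorem eventually_le_iterate_of_eventually_le {G x : ℕ → ℕ} (hG : Monotone G) (hid : id ≤ G)
    (hx : ∀ᶠ n in atTop, x (n + 1) ≤ G (x n)) : ∀ᶠ n in atTop, x n ≤ G^[n] n := by
  obtain ⟨n₀, hn₀⟩ := eventually_atTop.1 hx
  have le_iterate (k : ℕ) : x (n₀ + k) ≤ G^[k] (x n₀) :=
    hG.seq_le_seq (x := fun k => x (n₀ + k)) (y := fun k => G^[k] (x n₀)) k le_rfl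
      (fun k _ => hn₀ (n₀ + k) (Nat.le_add_right _ _))
      (fun k _ => (Function.iterate_succ_apply' G k _).ge)
  filter_upwards [eventually_ge_atTop n₀, eventually_ge_atTop (x n₀)] with n hn hxn
  calc x n = x (n₀ + (n - n₀)) := by rw [Nat.add_sub_cancel' hn]
    _ ≤ G^[n - n₀] (x n₀) := le_iterate _
    _ ≤ G^[n - n₀] n := hG.iterate _ hxn
    _ ≤ G^[n] n := Function.monotone_iterate_of_id_le hid (Nat.sub_le _ _) n

/-- A strictly increasing function above `f` that depends continuously on `f`. -/
def strictMajorant (f : ℕ → ℕ) (n : ℕ) : ℕ := n + ∑ j ∈ Finset.range (n + 1), f j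

theorem strictMono_strictMajorant (f : ℕ → ℕ) : StrictMono (strictMajorant f) :=
  strictMono_id.add_monotone fun _ _ h =>
    Finset.sum_le_sum_of_subset (Finset.range_mono (Nat.add_le_add_right h 1))

theorem le_strictMajorant (f : ℕ → ℕ) (n : ℕ) : f n ≤ strictMajorant f n :=
  (Finset.single_le_sum_of_canonicallyOrdered (Finset.self_mem_range_succ n)).trans
    (Nat.le_add_left _ _)

theorem continuous_strictMajorant : Continuous strictMajorant := by
  unfold strictMajorant
  fun_prop

end TailDomination

section Measurability

variable {α : Type*} [MeasurableSpace α]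

theorem measurable_sInf_setOf {p : α → ℕ → Prop} (hp : ∀ n, Measurable fun a => p a n) :
    Measurable fun a => sInf {n | p a n} := by
  classical
  have exists_or (a : α) : ∃ n, p a n ∨ ∀ m, ¬ p a m := by
    by_cases h : ∃ n, p a n
    · exact h.imp fun _ => Or.inl
    · exact ⟨0, Or.inr (not_exists.1 h)⟩
  have sInf_eq_find (a : α) : sInf {n | p a n} = Nat.find (exists_or a) := by
    by_cases h : ∃ n, p a n
    · have (n : ℕ) : (p a n ∨ ∀ m, ¬ p a m) ↔ p a n := or_iff_left (not_forall_not.2 h)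
      simp only [this]
      exact Nat.sInf_def h
    · have h : ∀ n, ¬ p a n := not_exists.1 h
      rw [(Nat.find_eq_zero _).2 (Or.inr h), Nat.sInf_eq_zero]
      exact Or.inr (Set.eq_empty_of_forall_notMem h)
  simp only [sInf_eq_find]
  exact measurable_find exists_or fun n =>
    measurableSet_setOfPred.2 ((hp n).or (Measurable.forall fun m => (hp m).not))

theorem measurable_iterate_apply {β : Type*} [MeasurableSpace β] [Countable β]
    [MeasurableSingletonClass β] {G : α → β → β} (hG : ∀ b, Measurable fun a => G a b)
    (m : ℕ) (b : β) : Measurable fun a => (G a)^[m] b := by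
  induction m with
  | zero => exact measurable_const
  | succ m ih =>
    simp only [Function.iterate_succ_apply']
    exact (measurable_from_prod_countable_left (f := fun p : α × β => G p.1 p.2) hG).comp
      (measurable_id.prodMk ih)

end Measurability

section InitialSegments

/-- The finite set `u` is an end-extension of `s`: this is the tree order on finite sets of naturals
in which the antichains are taken. -/
def IsInitialSegment (s u : Finset ℕ) : Prop := ∃ j, s = u.filter (· < j)

open Classical in
/-- The node `X ∩ {0, …, i - 1}` at level `i` of the branch given by `X`. -/
noncomputable def trace (X : Set ℕ) (i : ℕ) : Finset ℕ := (Finset.range i).filter (· ∈ X)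

theorem mem_trace {X : Set ℕ} {i m : ℕ} : m ∈ trace X i ↔ m < i ∧ m ∈ X := by
  simp only [trace, Finset.mem_filter, Finset.mem_range]

theorem trace_subset_range (X : Set ℕ) (i : ℕ) : trace X i ⊆ Finset.range i :=
  fun _ hm => Finset.mem_range.2 (mem_trace.1 hm).1

theorem isInitialSegment_trace (X : Set ℕ) {i j : ℕ} (hij : i ≤ j) :
    IsInitialSegment (trace X i) (trace X j) := by
  refine ⟨i, Finset.ext fun m => ?_⟩
  simp only [Finset.mem_filter, mem_trace]
  grind

theorem eventually_trace_eq_of_isInitialSegment {X : Set ℕ} (hX : X.Infinite) (Y : Set ℕ) :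
    ∀ᶠ i in atTop, IsInitialSegment (trace X i) (trace Y i) → trace X i = trace Y i := by
  by_cases hXY : X = Y
  · exact .of_forall fun i _ => by rw [hXY]
  · obtain ⟨m, hm⟩ : ∃ m, ¬ (m ∈ X ↔ m ∈ Y) := not_forall.1 (mt Set.ext hXY)
    obtain ⟨l, hlX, hml⟩ := hX.exists_gt m
    filter_upwards [eventually_gt_atTop l] with i hli
    rintro ⟨j, hj⟩
    have mem_iff (k : ℕ) : k < i ∧ k ∈ X ↔ (k < i ∧ k ∈ Y) ∧ k < j := by
      rw [← mem_trace, hj, Finset.mem_filter, mem_trace]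
    have hlj : l < j := ((mem_iff l).1 ⟨hli, hlX⟩).2
    grind

theorem eventually_isAntichain_trace (F : Finset (Set ℕ)) (hF : ∀ X ∈ F, X.Infinite) :
    ∀ᶠ i in atTop, IsAntichain IsInitialSegment ((trace · i) '' (F : Set (Set ℕ))) := by
  have : ∀ᶠ i in atTop, ∀ X ∈ F, ∀ Y ∈ F,
      IsInitialSegment (trace X i) (trace Y i) → trace X i = trace Y i :=
    (eventually_all_finset F).2 fun X hX => (eventually_all_finset F).2 fun Y _ =>
      eventually_trace_eq_of_isInitialSegment (hF X hX) Y
  filter_upwards [this] with i hi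
  rintro _ ⟨X, hX, rfl⟩ _ ⟨Y, hY, rfl⟩ hne hXY
  exact hne (hi X hX Y hY hXY)

theorem isLocallyConstant_trace_range_strictMajorant (i : ℕ) :
    IsLocallyConstant fun f => trace (Set.range (strictMajorant f)) i := by
  refine (IsLocallyConstant.iff_eventually_eq _).2 fun f => ?_
  have mem_range_iff {g : ℕ → ℕ} {m : ℕ} (hm : m < i) :
      m ∈ Set.range (strictMajorant g) ↔ ∃ n ∈ Finset.range i, strictMajorant g n = m :=
    ⟨fun ⟨n, hn⟩ => ⟨n, Finset.mem_range.2
      (((strictMono_strictMajorant g).le_apply.trans hn.le).trans_lt hm), hn⟩,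
      fun ⟨n, _, hn⟩ => ⟨n, hn⟩⟩
  have : ∀ᶠ g in 𝓝 f, ∀ n ∈ Finset.range i, strictMajorant g n = strictMajorant f n :=
    (eventually_all_finset _).2 fun n _ =>
      ((IsLocallyConstant.iff_continuous _).2
        ((continuous_apply n).comp continuous_strictMajorant)).eventually_eq f
  filter_upwards [this] with g hg
  ext m
  simp only [mem_trace]
  refine and_congr_right fun hm => ?_
  rw [mem_range_iff hm, mem_range_iff hm]
  exact exists_congr fun n => and_congr_right fun hn => by rw [hg n hn]

end InitialSegments

section AntichainCodes

/-- A level `i` together with a finite family of finite sets of naturals, meant to be nodes at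
level `i`. -/
abbrev LevelFamily := ℕ × Finset (Finset ℕ)

/-- A pair `(i, N)` is an antichain code if `N` is an antichain, for end-extension, of subsets of
`{0, …, i - 1}`. -/
structure IsAntichainCode (d : LevelFamily) : Prop where
  subset : d.2 ⊆ (Finset.range d.1).powerset
  isAntichain : IsAntichain IsInitialSegment (d.2 : Set (Finset ℕ))

/-- The antichain codes whose antichain meets the branch given by `X`; `tukeyPsi f` codes this
set for `X` the range of `strictMajorant f`. -/
def capturingCodes (X : Set ℕ) : Set LevelFamily :=
  {d | IsAntichainCode d ∧ trace X d.1 ∈ d.2}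

theorem infinite_biInter_capturingCodes (F : Finset (Set ℕ)) (hF : ∀ X ∈ F, X.Infinite) :
    (⋂ X ∈ F, capturingCodes X).Infinite := by
  classical
  obtain ⟨i₀, hi₀⟩ := eventually_atTop.1 (eventually_isAntichain_trace F hF)
  have injOn : Set.InjOn (fun i => (i, F.image (trace · i))) (Set.Ici i₀) :=
    fun _ _ _ _ h => congrArg Prod.fst h
  refine ((Set.Ici_infinite i₀).image injOn).mono ?_
  rintro _ ⟨i, hi, rfl⟩
  refine Set.mem_iInter₂.2 fun X hX => ⟨⟨?_, ?_⟩, Finset.mem_image_of_mem _ hX⟩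
  · exact Finset.image_subset_iff.2 fun Y _ => Finset.mem_powerset.2 (trace_subset_range Y i)
  · simpa only [Finset.coe_image] using hi₀ i hi

theorem finite_setOf_isAntichainCode_le (z : ℕ) : {d | IsAntichainCode d ∧ d.1 ≤ z}.Finite := by
  refine (Finset.finite_toSet
    (Finset.range (z + 1) ×ˢ (Finset.range (z + 1)).powerset.powerset)).subset ?_
  rintro d ⟨hd, hdz⟩
  have range_subset : Finset.range d.1 ⊆ Finset.range (z + 1) := Finset.range_mono (by lia)
  exact Finset.mem_coe.2 (Finset.mem_product.2 ⟨Finset.mem_range_succ_iff.2 hdz,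
    Finset.mem_powerset.2 (hd.subset.trans (Finset.powerset_mono.2 range_subset))⟩)

/-- The levels above `s` at which some member of `C` omits the node `s`. -/
def escapeLevels (C : Set LevelFamily) (s : Finset ℕ) : Set ℕ :=
  {i | s ⊆ Finset.range i ∧ ∃ N, (i, N) ∈ C ∧ s ∉ N}

/-- A bound on the first level at which `C` omits a node `s ⊆ {0, …, y}`, over all such `s`. Nodes
that are never omitted contribute `sInf ∅ = 0`; the sum and the summand `y` make the bound monotone
and inflationary in `y`. -/
noncomputable def escapeBound (C : Set LevelFamily) (y : ℕ) : ℕ :=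
  y + ∑ s ∈ (Finset.range (y + 1)).powerset, sInf (escapeLevels C s)

theorem monotone_escapeBound (C : Set LevelFamily) : Monotone (escapeBound C) :=
  fun _ _ h => add_le_add h (Finset.sum_le_sum_of_subset
    (Finset.powerset_mono.2 (Finset.range_mono (Nat.add_le_add_right h 1))))

theorem id_le_escapeBound (C : Set LevelFamily) : id ≤ escapeBound C :=
  fun _ => Nat.le_add_right _ _

theorem sInf_escapeLevels_le_escapeBound (C : Set LevelFamily) {s : Finset ℕ} {y : ℕ}
    (hs : s ⊆ Finset.range (y + 1)) : sInf (escapeLevels C s) ≤ escapeBound C y :=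
  (Finset.single_le_sum_of_canonicallyOrdered (f := fun s => sInf (escapeLevels C s))
    (Finset.mem_powerset.2 hs)).trans (Nat.le_add_left _ _)

theorem measurable_escapeBound {α : Type*} [MeasurableSpace α]
    {C : α → Set LevelFamily} (hC : ∀ d, Measurable fun a => d ∈ C a) (y : ℕ) :
    Measurable fun a => escapeBound (C a) y := by
  refine measurable_const.add (Finset.measurable_fun_sum _ fun s _ =>
    measurable_sInf_setOf fun i => ?_)
  exact measurable_const.and
    (Measurable.exists fun N => (hC (i, N)).and (measurable_const (a := s ∉ N)))

variable {X : Set ℕ} {C : Set LevelFamily}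

theorem escapeLevels_trace_nonempty (hX : X.Infinite) (hC : C.Infinite)
    (hCX : (C \ capturingCodes X).Finite) (y : ℕ) : (escapeLevels C (trace X y)).Nonempty := by
  obtain ⟨z, hzX, hyz⟩ := hX.exists_gt y
  obtain ⟨⟨i, N⟩, hdC, hd⟩ :=
    hC.exists_notMem_finite (hCX.union (finite_setOf_isAntichainCode_le z))
  have hdX : (i, N) ∈ capturingCodes X := by_contra fun h => hd (.inl ⟨hdC, h⟩)
  have hzi : z < i := not_le.1 fun h => hd (.inr ⟨hdX.1, h⟩)
  have hyi : y ≤ i := (hyz.trans hzi).le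
  refine ⟨i, (trace_subset_range X y).trans (Finset.range_mono hyi), N, hdC, fun hyN => ?_⟩
  have trace_eq : trace X y = trace X i :=
    hdX.1.isAntichain.eq hyN hdX.2 (isInitialSegment_trace X hyi)
  have hzy : z ∈ trace X y := trace_eq ▸ mem_trace.2 ⟨hzi, hzX⟩
  exact hyz.not_gt (mem_trace.1 hzy).1

theorem eventually_trace_mem_of_finite_diff (hCX : (C \ capturingCodes X).Finite) :
    ∀ᶠ i in atTop, ∀ N, (i, N) ∈ C → trace X i ∈ N := by
  obtain ⟨i₀, hi₀⟩ := (hCX.image Prod.fst).bddAbove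
  filter_upwards [eventually_gt_atTop i₀] with i hi N hN
  by_contra htrace
  exact hi.not_ge (hi₀ ⟨(i, N), ⟨hN, fun h => htrace h.2⟩, rfl⟩)

theorem eventually_le_escapeBound (hX : X.Infinite) (hC : C.Infinite)
    (hCX : (C \ capturingCodes X).Finite) :
    ∀ᶠ y in atTop, y ∈ X → ∀ z, (∀ m ∈ X, y < m → z ≤ m) → z ≤ escapeBound C y := by
  filter_upwards [eventually_forall_ge_atTop.2 (eventually_trace_mem_of_finite_diff hCX)]
    with y htrace hyX z hz
  refine le_trans ?_ (sInf_escapeLevels_le_escapeBound C (trace_subset_range X (y + 1)))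
  obtain ⟨hsub, N, hN, hnotMem⟩ := Nat.sInf_mem (escapeLevels_trace_nonempty hX hC hCX (y + 1))
  set i := sInf (escapeLevels C (trace X (y + 1)))
  have hyi : y < i := Finset.mem_range.1 (hsub (mem_trace.2 ⟨y.lt_succ_self, hyX⟩))
  by_contra! hiz
  have trace_eq : trace X i = trace X (y + 1) := by
    ext m
    simp only [mem_trace]
    grind
  exact hnotMem (trace_eq ▸ htrace i hyi.le N hN)

theorem eventually_le_iterate_escapeBound {x : ℕ → ℕ} (hx : StrictMono x)
    (hC : C.Infinite) (hCx : (C \ capturingCodes (Set.range x)).Finite) :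
    ∀ᶠ n in atTop, x n ≤ (escapeBound C)^[n] n := by
  refine eventually_le_iterate_of_eventually_le (monotone_escapeBound C) (id_le_escapeBound C) ?_
  have bound := eventually_le_escapeBound (Set.infinite_range_of_injective hx.injective) hC hCx
  filter_upwards [hx.tendsto_atTop.eventually bound] with n hn
  refine hn ⟨n, rfl⟩ _ ?_
  rintro _ ⟨l, rfl⟩ hnl
  exact hx.monotone (hx.lt_iff_lt.1 hnl)

end AntichainCodes

section TukeyMorphism

/-- The set of pairs `(i, N)` coded by a set of naturals, via a fixed enumeration of all pairs. -/
def decode (A : Set ℕ) : Set LevelFamily := Denumerable.eqv LevelFamily ⁻¹' A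

theorem infinite_decode {A : Set ℕ} : (decode A).Infinite ↔ A.Infinite := by
  rw [decode, ← Equiv.image_symm_eq_preimage, Set.infinite_image_iff (Equiv.injective _).injOn]

open Classical in
/-- The characteristic function of the set of naturals coding the elements of `C`. -/
noncomputable def encode (C : Set LevelFamily) (k : ℕ) : Bool :=
  decide ((Denumerable.eqv LevelFamily).symm k ∈ C)

theorem decode_bset_encode (C : Set LevelFamily) : decode (bset (encode C)) = C := by
  ext d
  simp [decode, bset, encode]

theorem infinite_range_strictMajorant (f : ℕ → ℕ) : (Set.range (strictMajorant f)).Infinite :=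
  Set.infinite_range_of_injective (strictMono_strictMajorant f).injective

/-- The map `ψ` of the Tukey morphism. -/
noncomputable def tukeyPsi (f : ℕ → ℕ) : InfC :=
  ⟨encode (capturingCodes (Set.range (strictMajorant f))), by
    rw [← infinite_decode, decode_bset_encode]
    simpa using infinite_biInter_capturingCodes {Set.range (strictMajorant f)}
      (by simpa using infinite_range_strictMajorant f)⟩

/-- The map `φ` of the Tukey morphism. -/
noncomputable def tukeyPhi (A : InfC) (n : ℕ) : ℕ := (escapeBound (decode (bset A.1)))^[n] n

theorem decode_tukeyPsi (f : ℕ → ℕ) :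
    decode (bset (tukeyPsi f).1) = capturingCodes (Set.range (strictMajorant f)) :=
  decode_bset_encode _

theorem continuous_tukeyPsi : Continuous tukeyPsi := by
  classical
  refine Continuous.subtype_mk (continuous_pi fun k => ?_) _
  set d : LevelFamily := (Denumerable.eqv LevelFamily).symm k
  refine ((isLocallyConstant_trace_range_strictMajorant d.1).comp
    fun s => decide (IsAntichainCode d ∧ s ∈ d.2)).continuous.congr fun f => ?_
  exact decide_eq_decide.2 Iff.rfl

theorem measurable_tukeyPhi : Measurable tukeyPhi := by
  refine measurable_pi_lambda _ fun n =>
    measurable_iterate_apply (measurable_escapeBound fun d => ?_) n n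
  have : Measurable fun A : InfC => A.1 (Denumerable.eqv LevelFamily d) :=
    (measurable_pi_apply _).comp measurable_subtype_coe
  exact measurableSet_setOfPred.1 (this (measurableSet_singleton true))

theorem centered_range_tukeyPsi : Centered (Set.range tukeyPsi) := by
  classical
  intro s hs _
  obtain ⟨F, -, rfl⟩ := Finset.subset_set_image_iff.1 (Set.image_univ ▸ hs)
  have := infinite_biInter_capturingCodes (F.image fun f => Set.range (strictMajorant f))
    (Finset.forall_mem_image.2 fun f _ => infinite_range_strictMajorant f)
  rw [← infinite_decode]
  simpa only [decode, Set.preimage_iInter, Finset.set_biInter_finset_image, ← decode_tukeyPsi]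
    using this

theorem eventually_le_tukeyPhi {A : InfC} {f : ℕ → ℕ}
    (h : SubStar (bset A.1) (bset (tukeyPsi f).1)) : ∀ᶠ n in atTop, f n ≤ tukeyPhi A n := by
  have finite_diff : (decode (bset A.1) \ decode (bset (tukeyPsi f).1)).Finite :=
    Set.Finite.preimage (s := bset A.1 \ bset (tukeyPsi f).1) (Equiv.injective _).injOn h
  rw [decode_tukeyPsi] at finite_diff
  filter_upwards [eventually_le_iterate_escapeBound (strictMono_strictMajorant f)
    (infinite_decode.2 A.2) finite_diff] with n hn
  exact (le_strictMajorant f n).trans hn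

end TukeyMorphism

/-- There exist a continuous `ψ : ℕ^ℕ → [ω]^ω` and a Borel `φ : [ω]^ω → ℕ^ℕ`
such that (a) `ψ(ℕ^ℕ)` is centered and (b) `A ⊆* ψ(f)` implies `f ≤* φ(A)`.
(A Borel Tukey morphism witnessing 𝔟 ≥_BT 𝔭.) -/
theorem stmt6 :
    ∃ (ψ : (ℕ → ℕ) → InfC) (φ : InfC → (ℕ → ℕ)),
      Continuous ψ ∧ Measurable φ ∧
      Centered (Set.range ψ) ∧
      ∀ (A : InfC) (f : ℕ → ℕ), SubStar (bset A.1) (bset (ψ f).1) →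
        ∀ᶠ n in cofinite, f n ≤ φ A n := by
  refine ⟨tukeyPsi, tukeyPhi, continuous_tukeyPsi, measurable_tukeyPhi, centered_range_tukeyPsi, ?_⟩
  intro A f h
  rw [Nat.cofinite_eq_atTop]
  exact eventually_le_tukeyPhi h
end

section
/- There exists a continuous function ψ : ℕ^ℕ → [ω]^ω such that: (a) the family ψ(ℕ^ℕ) is centered (for any finitely many f_1, …, f_k ∈ ℕ^ℕ, the intersection ψ(f_1) ∩ ⋯ ∩ ψ(f_k) is infinite), and (b) for every set S ⊆ ℕ^ℕ that is unbounded with respect to everywhere domination (i.e., there is no g ∈ ℕ^ℕ with f(k) ≤ g(k) for every f ∈ S and every k ∈ ℕ), the intersection ⋂_{f ∈ S} ψ(f) is finite. In particular, for every A ∈ [ω]^ω the set {f ∈ ℕ^ℕ : A ⊆* ψ(f)} is ≤*-bounded. -/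
open Filter

/-! Replace `ℕ` as the ground set of `[ω]^ω` by the countable set of pairs `(N, F)`, where `F` is a
finite set of truncations to level `N` (restrict `f` to `N`, cut its values down to at most `N`).
Put `(N, F)` into `ψ(f)` when `F` contains the truncation of `f` and no member of `F` takes the
value `N` at a coordinate below `|F|`. Finitely many functions are captured by the set of their
truncations at every large `N`. If `{f k : f ∈ S}` is unbounded, then `k + 1` functions in `S` with
different values at `k` force `|F| > k` for every common pair `(N, F)` with `N` large, so `f k < N`
for all `f ∈ S`, which is absurd; and there are only finitely many pairs with `N` small.

The set `{f : A ⊆* ψ(f)}` is the union over `m` of the sets `{f : A ∖ ψ(f) ⊆ [0, m]}`, each of which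
is bounded everywhere; a function eventually dominating countably many bounds is a `≤*`-bound. -/

theorem exists_forall_eventually_le {β : Type*} [SemilatticeSup β] (g : ℕ → ℕ → β) :
    ∃ h : ℕ → β, ∀ m, ∀ᶠ n in atTop, g m n ≤ h n := by
  refine ⟨fun n => partialSups g n n, fun m => ?_⟩
  filter_upwards [eventually_ge_atTop m] with n hmn
  exact le_partialSups_of_le g hmn n

theorem exists_eventually_le_of_subStar {V : (ℕ → ℕ) → Set ℕ}
    (hV : ∀ S : Set (ℕ → ℕ), ¬ BddAbove S → (⋂ f ∈ S, V f).Finite) {A : Set ℕ}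
    (hA : A.Infinite) :
    ∃ g : ℕ → ℕ, ∀ f, SubStar A (V f) → ∀ᶠ n in cofinite, f n ≤ g n := by
  have bddAbove_of_diff_subset (m : ℕ) : BddAbove {f | A \ V f ⊆ Set.Iic m} := by
    by_contra hunbdd
    refine hA.sdiff (Set.finite_Iic m) ((hV _ hunbdd).subset fun n hn => ?_)
    exact Set.mem_iInter₂.2 fun f hf => by_contra fun hnf => hn.2 (hf ⟨hn.1, hnf⟩)
  choose g hg using bddAbove_of_diff_subset
  obtain ⟨h, hgh⟩ := exists_forall_eventually_le g
  refine ⟨h, fun f hf => ?_⟩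
  obtain ⟨m, hm⟩ := Set.Finite.bddAbove hf
  rw [Nat.cofinite_eq_atTop]
  filter_upwards [hgh m] with n hn
  exact (hg m hm n).trans hn

theorem exists_continuous_bset_eq {X : Type*} [TopologicalSpace X] {V : X → Set ℕ}
    (hinf : ∀ x, (V x).Infinite) (hclopen : ∀ n, IsClopen {x | n ∈ V x}) :
    ∃ ψ : X → InfC, Continuous ψ ∧ ∀ x, bset (ψ x).1 = V x := by
  have bset_boolIndicator (s : Set ℕ) : bset s.boolIndicator = s :=
    s.preimage_boolIndicator_true
  refine ⟨fun x => ⟨(V x).boolIndicator, (bset_boolIndicator (V x)).symm ▸ hinf x⟩,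
    Continuous.subtype_mk (continuous_pi fun n => ?_) _, fun x => bset_boolIndicator (V x)⟩
  exact (continuous_boolIndicator_iff_isClopen {x | n ∈ V x}).2 (hclopen n)

/-- The truncation of `f` to level `N`: its restriction to `N`, with values cut down to at most `N`.
The value `Fin.last N` marks the coordinates where `N ≤ f i`, so that `f i` cannot be recovered. -/
def truncate (N : ℕ) (f : ℕ → ℕ) : Fin N → Fin (N + 1) := fun i => Fin.clamp (f i) N

theorem truncate_eq_last_iff {N : ℕ} {f : ℕ → ℕ} {i : Fin N} :
    truncate N f i = Fin.last N ↔ N ≤ f i := by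
  simp [truncate, Fin.ext_iff]

theorem eq_of_truncate_eq {N k : ℕ} {f g : ℕ → ℕ} (hk : k < N) (hf : f k < N) (hg : g k < N)
    (h : truncate N f = truncate N g) : f k = g k := by
  have hval := congrArg Fin.val (congrFun h ⟨k, hk⟩)
  simpa only [truncate, Fin.coe_clamp, min_eq_left hf.le, min_eq_left hg.le] using hval

theorem continuous_truncate (N : ℕ) : Continuous (truncate N) :=
  continuous_pi fun i =>
    (continuous_of_discreteTopology (f := (Fin.clamp · N))).comp (continuous_apply (i : ℕ))

/-- A finite approximation `⟨N, F⟩` to a set of functions: a level `N` and a set `F` of truncations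
to that level. Approximations replace the natural numbers as the ground set of `[ω]^ω`. -/
abbrev Approx : Type := Σ N : ℕ, Finset (Fin N → Fin (N + 1))

/-- A set `F` of truncations is faithful if each of its members determines the first `F.card` values
of any function it truncates, i.e. avoids the marker `Fin.last N` there. -/
def Faithful {N : ℕ} (F : Finset (Fin N → Fin (N + 1))) : Prop :=
  ∀ s ∈ F, ∀ i : Fin N, (i : ℕ) < F.card → s i ≠ Fin.last N

/-- The faithful approximations that capture `f`: this is `ψ(f)` before the identification of
`Approx` with `ℕ`. -/
def approximations (f : ℕ → ℕ) : Set Approx := {p | Faithful p.2 ∧ truncate p.1 f ∈ p.2}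

theorem isClopen_setOf_mem_approximations (p : Approx) :
    IsClopen {f | p ∈ approximations f} :=
  (isClopen_discrete {s | Faithful p.2 ∧ s ∈ p.2}).preimage (continuous_truncate p.1)

theorem faithful_image_truncate {N : ℕ} {s : Finset (ℕ → ℕ)}
    (h : ∀ f ∈ s, ∀ i < s.card, f i < N) : Faithful (s.image (truncate N)) := by
  refine Finset.forall_mem_image.2 fun f hf i hi => ?_
  rw [Ne, truncate_eq_last_iff, not_le]
  exact h f hf i (hi.trans_le Finset.card_image_le)

theorem infinite_iInter_approximations (s : Finset (ℕ → ℕ)) :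
    (⋂ f ∈ s, approximations f).Infinite := by
  have eventually_lt : ∀ᶠ N in atTop, ∀ f ∈ s, ∀ i < s.card, f i < N :=
    (eventually_all_finset s).2 fun f _ =>
      (Set.finite_lt_nat s.card).eventually_all.2 fun i _ => eventually_gt_atTop (f i)
  obtain ⟨M, hM⟩ := eventually_atTop.1 eventually_lt
  refine ((Set.Ici_infinite M).image (f := fun N => (⟨N, s.image (truncate N)⟩ : Approx))
    fun _ _ _ _ h => congrArg Sigma.fst h).mono (Set.image_subset_iff.2 fun N hN => ?_)
  exact Set.mem_iInter₂.2 fun f hf =>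
    ⟨faithful_image_truncate (hM N hN), Finset.mem_image_of_mem _ hf⟩

theorem exists_fst_gt_of_infinite {β : ℕ → Type*} [∀ n, Finite (β n)] {P : Set (Σ n, β n)}
    (hP : P.Infinite) (N : ℕ) : ∃ p ∈ P, N < p.1 := by
  by_contra! hle
  refine hP ((Set.finite_range fun q : Σ n : Set.Iic N, β n => (⟨q.1, q.2⟩ : Σ n, β n)).subset ?_)
  exact fun p hp => ⟨⟨⟨p.1, hle p hp⟩, p.2⟩, rfl⟩

theorem apply_lt_of_mem_approximations {p : Approx} {k : ℕ} {s : Finset (ℕ → ℕ)}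
    (hs : ∀ g ∈ s, p ∈ approximations g) (hinj : Set.InjOn (Function.eval k) (s : Set (ℕ → ℕ)))
    (hcard : k < s.card) (hk : k < p.1) (hlt : ∀ g ∈ s, g k < p.1) {f : ℕ → ℕ}
    (hf : p ∈ approximations f) : f k < p.1 := by
  have card_le : s.card ≤ p.2.card :=
    Finset.card_le_card_of_injOn (truncate p.1) (fun g hg => (hs g hg).2) fun g hg g' hg' h =>
      hinj hg hg' (eq_of_truncate_eq hk (hlt g hg) (hlt g' hg') h)
  by_contra! hle
  exact hf.1 _ hf.2 ⟨k, hk⟩ (hcard.trans_le card_le) (truncate_eq_last_iff.2 hle)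

theorem bddAbove_of_infinite_iInter_approximations {S : Set (ℕ → ℕ)}
    (hS : (⋂ f ∈ S, approximations f).Infinite) : BddAbove S := by
  refine bddAbove_pi.2 fun k => ?_
  by_contra hunbdd
  obtain ⟨s, hsS, hcard, hinj⟩ : ∃ s : Finset (ℕ → ℕ), ↑s ⊆ S ∧ s.card = k + 1 ∧
      Set.InjOn (Function.eval k) (s : Set (ℕ → ℕ)) := by
    obtain ⟨D, hDS, hDcard⟩ :=
      (Set.infinite_of_not_bddAbove hunbdd).exists_subset_card_eq (k + 1)
    obtain ⟨s, hsS, hinj, rfl⟩ := Finset.exists_subset_injOn_image_eq_of_surjOn S D hDS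
    exact ⟨s, hsS, (Finset.card_image_of_injOn hinj).symm.trans hDcard, hinj⟩
  obtain ⟨p, hp, hlarge⟩ := exists_fst_gt_of_infinite hS (max k (s.sup (Function.eval k)))
  obtain ⟨hk, hsup⟩ := max_lt_iff.1 hlarge
  have apply_lt (g : ℕ → ℕ) (hg : g ∈ s) : g k < p.1 :=
    (Finset.le_sup (f := Function.eval k) hg).trans_lt hsup
  have mem_approximations (f : ℕ → ℕ) (hf : f ∈ S) : p ∈ approximations f :=
    Set.mem_iInter₂.1 hp f hf
  refine hunbdd ⟨p.1, Set.forall_mem_image.2 fun f hf => le_of_lt ?_⟩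
  exact apply_lt_of_mem_approximations (fun g hg => mem_approximations g (hsS hg)) hinj
    (hcard ▸ k.lt_succ_self) hk apply_lt (mem_approximations f hf)

/-- There is a continuous `ψ : ℕ^ℕ → [ω]^ω` such that (a) `ψ(ℕ^ℕ)` is centered:
any finitely many values have infinite intersection, and (b) for every
`S ⊆ ℕ^ℕ` unbounded with respect to everywhere domination, `⋂_{f ∈ S} ψ(f)` is
finite.  In particular, for every `A ∈ [ω]^ω` the set
`{f : A ⊆* ψ(f)}` is `≤*`-bounded. -/
theorem stmt8 :
    ∃ ψ : (ℕ → ℕ) → InfC,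
      Continuous ψ ∧
      (∀ s : Finset (ℕ → ℕ), s.Nonempty → (⋂ f ∈ s, bset (ψ f).1).Infinite) ∧
      (∀ S : Set (ℕ → ℕ), (¬ ∃ g : ℕ → ℕ, ∀ f ∈ S, ∀ k, f k ≤ g k) →
        (⋂ f ∈ S, bset (ψ f).1).Finite) ∧
      (∀ A : InfC, ∃ g : ℕ → ℕ, ∀ f : ℕ → ℕ,
        SubStar (bset A.1) (bset (ψ f).1) → ∀ᶠ n in cofinite, f n ≤ g n) := by
  obtain ⟨e⟩ : Nonempty (ℕ ≃ Approx) := nonempty_equiv_of_countable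
  have infinite_preimage (s : Finset (ℕ → ℕ)) : (⋂ f ∈ s, e ⁻¹' approximations f).Infinite := by
    simpa only [Set.preimage_iInter] using
      (infinite_iInter_approximations s).preimage (f := e) (by simp)
  have finite_preimage (S : Set (ℕ → ℕ)) (hS : ¬ BddAbove S) :
      (⋂ f ∈ S, e ⁻¹' approximations f).Finite := by
    have hfin := Set.not_infinite.1 (mt bddAbove_of_infinite_iInter_approximations hS)
    simpa only [Set.preimage_iInter] using hfin.preimage e.injective.injOn
  obtain ⟨ψ, hψ, hbset⟩ := exists_continuous_bset_eq (V := fun f => e ⁻¹' approximations f)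
    (fun f => by simpa using infinite_preimage {f})
    (fun n => isClopen_setOf_mem_approximations (e n))
  refine ⟨ψ, hψ, ?_⟩
  simp only [hbset]
  exact ⟨fun s _ => infinite_preimage s, finite_preimage,
    fun A => exists_eventually_le_of_subStar finite_preimage A.2⟩
end

section
/- For every n ≥ 1, there is no function ψ : 2^ℕ → 2^ℕ that is continuous on some comeager subset of 2^ℕ (in particular, no Baire measurable and no Borel such function) with the property that for every S ⊆ 2^ℕ, if S is an n-splitting family then the image ψ(S) is an (n+1)-splitting family. (Hence there is no Borel Tukey morphism from 𝔰_n to 𝔰_{n+1}.) -/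
/-- `c ∈ 2^ℕ` splits the infinite set `A ⊆ ℕ`: both `{k ∈ A | c k = false}`
and `{k ∈ A | c k = true}` are infinite. -/
def Splits (c : ℕ → Bool) (A : Set ℕ) : Prop :=
  {k ∈ A | c k = false}.Infinite ∧ {k ∈ A | c k = true}.Infinite

/-- `S ⊆ 2^ℕ` is an `n`-splitting family: for all infinite `A_1, …, A_n ⊆ ℕ`
some `c ∈ S` splits every `A_i`. -/
def NSplitting (n : ℕ) (S : Set (ℕ → Bool)) : Prop :=
  ∀ A : Fin n → Set ℕ, (∀ i, (A i).Infinite) → ∃ c ∈ S, ∀ i, Splits c (A i)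

/-!
Let `ψ` be continuous on a comeager set `G`. It suffices to find infinite sets `A₀, …, Aₙ` such that
for all infinite `B₁, …, Bₙ` some `c` splits every `Bᵢ` while `ψ c` fails to split some `Aⱼ`.

If on some nonempty open `V` the values `ψ c k` with `c ∈ G ∩ V` are always `true` for infinitely
many `k`, let every `Aⱼ` be the set of these `k`, and let `c ∈ G ∩ V` be generic. Otherwise a fusion
argument yields an interval partition `(Iᵢ)` of `ℕ` and numbers `kᵢ` such that, for every infinite
`J ⊆ ℕ`, each `d` can be modified on `⋃ i ∈ J, Iᵢ` alone to some `c ∈ G` with `ψ c kᵢ = false` for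
all `i ∈ J`. Divide the indices into `n + 1` infinite classes `Jⱼ` and put `Aⱼ = {kᵢ | i ∈ Jⱼ}`.
By pigeonhole, for some `j` every `Bᵢ` is infinite outside the intervals indexed by `Jⱼ`; take a `d`
splitting what remains of the `Bᵢ` there, and modify it on those intervals.
-/

open Filter PiNat Set Topology
open scoped Function

section Residual

theorem exists_antitone_isOpen_dense_of_mem_residual {X : Type*} [TopologicalSpace X] [BaireSpace X]
    {G : Set X} (hG : G ∈ residual X) :
    ∃ W : ℕ → Set X, Antitone W ∧ (∀ l, IsOpen (W l)) ∧ (∀ l, Dense (W l)) ∧ ⋂ l, W l ⊆ G := by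
  obtain ⟨H, hHG, hHδ, hHd⟩ := mem_residual.1 hG
  obtain ⟨W, hW, rfl⟩ := hHδ.eq_iInter_nat
  exact ⟨dissipate W, antitone_dissipate, fun l => (finite_Iic l).isOpen_biInter fun i _ => hW i,
    fun l => hHd.mono (iInter_subset_dissipate l), iInter_dissipate.trans_subset hHG⟩

variable {α : Type*} [TopologicalSpace α] [DiscreteTopology α]

theorem exists_cylinder_subset_of_isOpen {V : Set (ℕ → α)} (hV : IsOpen V) {c : ℕ → α}
    (hc : c ∈ V) : ∃ m, cylinder c m ⊆ V := by
  obtain ⟨_, ⟨f, m, rfl⟩, hcf, hfV⟩ :=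
    (isTopologicalBasis_cylinders fun _ : ℕ => α).exists_subset_of_mem_open hc hV
  exact ⟨m, (mem_cylinder_iff_eq.1 hcf).trans_subset hfV⟩

theorem infinite_setOf_eq_mem_residual {A : Set ℕ} (hA : A.Infinite) (b : α) :
    {c : ℕ → α | {k ∈ A | c k = b}.Infinite} ∈ residual (ℕ → α) := by
  have hres (N : ℕ) : ∀ᶠ c in residual (ℕ → α), ∃ k ∈ {k ∈ A | N < k}, c k = b := by
    refine residual_of_dense_open ?_ (dense_iff_inter_open.2 ?_)
    · have hUnion : {c : ℕ → α | ∃ k ∈ {k ∈ A | N < k}, c k = b} =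
          ⋃ k ∈ {k ∈ A | N < k}, Function.eval k ⁻¹' {b} := by
        ext; simp
      exact hUnion ▸ isOpen_biUnion fun k _ => (isOpen_discrete _).preimage (continuous_apply k)
    · rintro V hV ⟨f, hf⟩
      obtain ⟨m, hm⟩ := exists_cylinder_subset_of_isOpen hV hf
      obtain ⟨k, hkA, hk⟩ := hA.exists_gt (max m N)
      exact ⟨Function.update f k b,
        hm (cylinder_anti f ((le_max_left m N).trans hk.le) (update_mem_cylinder f k b)),
        k, ⟨hkA, (le_max_right m N).trans_lt hk⟩, Function.update_self k b f⟩
  filter_upwards [eventually_countable_forall.2 hres] with c hc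
  refine infinite_of_forall_exists_gt fun N => ?_
  obtain ⟨k, ⟨hkA, hNk⟩, hck⟩ := hc N
  exact ⟨k, ⟨hkA, hck⟩, hNk⟩

end Residual

section Splits

theorem eventually_residual_forall_splits {ι : Type*} [Countable ι] {B : ι → Set ℕ}
    (hB : ∀ i, (B i).Infinite) : ∀ᶠ c in residual (ℕ → Bool), ∀ i, Splits c (B i) :=
  eventually_countable_forall.2 fun i =>
    inter_mem (infinite_setOf_eq_mem_residual (hB i) false)
      (infinite_setOf_eq_mem_residual (hB i) true)

theorem Splits.of_sdiff_of_eqOn_compl {c d : ℕ → Bool} {B D : Set ℕ} (hd : Splits d (B \ D))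
    (hcd : EqOn c d Dᶜ) : Splits c B :=
  ⟨hd.1.mono fun _ hx => ⟨hx.1.1, (hcd hx.1.2).trans hx.2⟩,
    hd.2.mono fun _ hx => ⟨hx.1.1, (hcd hx.1.2).trans hx.2⟩⟩

theorem not_splits_of_forall_eq {c : ℕ → Bool} {A : Set ℕ} {b : Bool} (h : ∀ k ∈ A, c k = b) :
    ¬ Splits c A := by
  rintro ⟨hfalse, htrue⟩
  obtain ⟨k, hk, hck⟩ := hfalse.nonempty
  obtain ⟨l, hl, hcl⟩ := htrue.nonempty
  exact Bool.false_ne_true (hck.symm.trans ((h k hk).trans ((h l hl).symm.trans hcl)))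

end Splits

theorem exists_forall_infinite_sdiff {ι κ β : Type*} [Fintype ι] [Fintype κ]
    (hcard : Fintype.card κ < Fintype.card ι) {B : κ → Set β} (hB : ∀ i, (B i).Infinite)
    {D : ι → Set β} (hD : Pairwise (Disjoint on D)) : ∃ j, ∀ i, (B i \ D j).Infinite := by
  by_contra! hfin
  choose i hi using hfin
  obtain ⟨j, j', hne, heq⟩ := Fintype.exists_ne_map_eq_of_card_lt i hcard
  refine hB (i j) (((hi j).union (heq ▸ hi j')).subset ?_)
  rw [← sdiff_inter, (hD hne).inter_eq, sdiff_empty]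

/-- The union of the blocks with index in `J` of the interval partition of `[m 0, ∞)` into the sets
`[m i, m (i + 1))`: the coordinates at which the fusion argument may modify a sequence. -/
def blocks (m : ℕ → ℕ) (J : Set ℕ) : Set ℕ :=
  ⋃ i ∈ J, Ico (m i) (m (i + 1))

section Fusion

variable {α : Type*} {m : ℕ → ℕ}

theorem disjoint_blocks (hm : Monotone m) {J J' : Set ℕ} (hJ : Disjoint J J') :
    Disjoint (blocks m J) (blocks m J') := by
  have hIco : Pairwise (Disjoint on fun i => Ico (m i) (m (i + 1))) :=
    hm.pairwise_disjoint_on_Ico_succ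
  rw [disjoint_iff_inter_eq_empty, blocks, blocks, ← biUnion_inter_of_pairwise_disjoint hIco,
    hJ.inter_eq, biUnion_empty]

theorem exists_forall_mem_cylinder (hm : StrictMono m) {e : ℕ → ℕ → α}
    (he : ∀ i, e (i + 1) ∈ cylinder (e i) (m i)) : ∃ c, ∀ i, c ∈ cylinder (e i) (m i) := by
  have hstable {i i' : ℕ} (hii' : i ≤ i') : e i' ∈ cylinder (e i) (m i) := by
    induction i', hii' using Nat.le_induction with
    | base => exact self_mem_cylinder _ _
    | succ a ha ih => exact fun x hx => (he a x (hx.trans_le (hm.monotone ha))).trans (ih x hx)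
  refine ⟨fun x => e (x + 1) x, fun i x hx => ?_⟩
  rcases le_total i (x + 1) with h | h
  · exact hstable h x hx
  · exact (hstable h x hm.le_apply).symm

theorem exists_eqOn_compl_blocks_forall_mem (hm : StrictMono m) {Q : ℕ → Set (ℕ → α)}
    (hQ : ∀ i f, ∃ g, EqOn g f (Ico (m i) (m (i + 1)))ᶜ ∧ cylinder g (m (i + 1)) ⊆ Q i)
    (J : Set ℕ) (d : ℕ → α) : ∃ c, EqOn c d (blocks m J)ᶜ ∧ ∀ i ∈ J, c ∈ Q i := by
  classical
  choose g hgf hgQ using hQ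
  let e : ℕ → ℕ → α := fun i => Nat.rec d (fun i f => if i ∈ J then g i f else f) i
  have he_mem {i : ℕ} (hi : i ∈ J) : e (i + 1) = g i (e i) := if_pos hi
  have he_notMem {i : ℕ} (hi : i ∉ J) : e (i + 1) = e i := if_neg hi
  have he (i : ℕ) : e (i + 1) ∈ cylinder (e i) (m i) := by
    by_cases hi : i ∈ J
    · exact fun x hx => he_mem hi ▸ hgf i (e i) fun h => h.1.not_gt hx
    · exact he_notMem hi ▸ self_mem_cylinder _ _
  have hed (i : ℕ) : EqOn (e i) d (blocks m J)ᶜ := by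
    induction i with
    | zero => exact eqOn_refl _ _
    | succ i ih =>
      by_cases hi : i ∈ J
      · rw [he_mem hi]
        exact ((hgf i (e i)).mono (compl_subset_compl.2 (subset_biUnion_of_mem hi))).trans ih
      · rwa [he_notMem hi]
  obtain ⟨c, hc⟩ := exists_forall_mem_cylinder hm he
  refine ⟨c, fun x hx => (hc (x + 1) x hm.le_apply).trans (hed (x + 1) hx), fun i hi => ?_⟩
  exact hgQ i (e i) (he_mem hi ▸ hc (i + 1))

end Fusion

section FiniteAlphabet

variable {α : Type*} [Finite α]

theorem finite_range_cylinder (m : ℕ) : (range fun f : ℕ → α => cylinder f m).Finite := by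
  refine (finite_range fun s : Fin m → α => {h : ℕ → α | ∀ i : Fin m, h i = s i}).subset ?_
  rintro _ ⟨f, rfl⟩
  exact ⟨fun i => f i, by ext; simp [Fin.forall_iff]⟩

theorem eventually_forall_cylinder {ι : Type*} {l : Filter ι} {m : ℕ}
    {p : Set (ℕ → α) → ι → Prop} (h : ∀ f, ∀ᶠ i in l, p (cylinder f m) i) :
    ∀ᶠ i in l, ∀ f, p (cylinder f m) i := by
  simpa only [forall_mem_range] using
    (eventually_all_finite (finite_range_cylinder m)).2 (forall_mem_range.2 h)

variable [TopologicalSpace α] [DiscreteTopology α]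

theorem eventually_forall_exists_cylinder_subset {P : Set (ℕ → α)} (hP : IsOpen P) {m : ℕ}
    (hmeet : ∀ f, (cylinder f m ∩ P).Nonempty) :
    ∀ᶠ M in atTop, ∀ f, ∃ g, EqOn g f (Ico m M)ᶜ ∧ cylinder g M ⊆ P := by
  classical
  have hext : ∀ᶠ M in atTop, ∀ f, ∃ g ∈ cylinder f m, cylinder g M ⊆ P := by
    refine eventually_forall_cylinder (p := fun C M => ∃ g ∈ C, cylinder g M ⊆ P) fun f => ?_
    obtain ⟨g, hgf, hgP⟩ := hmeet f
    obtain ⟨M₀, hM₀⟩ := exists_cylinder_subset_of_isOpen hP hgP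
    filter_upwards [eventually_ge_atTop M₀] with M hM
    exact ⟨g, hgf, (cylinder_anti g hM).trans hM₀⟩
  filter_upwards [hext] with M hM f
  obtain ⟨g, hgf, hgP⟩ := hM f
  refine ⟨(Iio M).piecewise g f, fun x hx => ?_, fun h hh => hgP fun x hx => ?_⟩
  · by_cases hxM : x < M
    · exact (piecewise_eq_of_mem (Iio M) g f hxM).trans
        (hgf x (not_le.1 fun hmx => hx ⟨hmx, hxM⟩))
    · exact piecewise_eq_of_notMem _ _ _ hxM
  · exact (hh x hx).trans (piecewise_eq_of_mem _ _ _ hx)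

theorem exists_forall_exists_cylinder_subset {W : Set (ℕ → α)} (hWo : IsOpen W) (hWd : Dense W)
    {O : ℕ → Set (ℕ → α)} (hO : ∀ k, IsOpen (O k))
    (hmeet : ∀ V, IsOpen V → V.Nonempty → ∀ᶠ k in atTop, (V ∩ O k).Nonempty) (m : ℕ) :
    ∃ k ≥ m, ∃ M > k, ∀ f, ∃ g, EqOn g f (Ico m M)ᶜ ∧ cylinder g M ⊆ W ∩ O k := by
  have hcyl : ∀ᶠ k in atTop, ∀ f, (cylinder f m ∩ (W ∩ O k)).Nonempty := by
    refine eventually_forall_cylinder (p := fun C k => (C ∩ (W ∩ O k)).Nonempty) fun f => ?_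
    have hfo := isOpen_cylinder (fun _ => α) f m
    have hne := hWd.inter_open_nonempty _ hfo ⟨f, self_mem_cylinder f m⟩
    simpa only [inter_assoc] using hmeet _ (hfo.inter hWo) hne
  obtain ⟨k, hk, hmk⟩ := (hcyl.and (eventually_ge_atTop m)).exists
  obtain ⟨M, hM, hkM⟩ := ((eventually_forall_exists_cylinder_subset (hWo.inter (hO k)) hk).and
    (eventually_gt_atTop k)).exists
  exact ⟨k, hmk, M, hkM, hM⟩

theorem exists_strictMono_forall_mem_residual_eqOn_compl_blocks {G : Set (ℕ → α)}
    (hG : G ∈ residual (ℕ → α)) {O : ℕ → Set (ℕ → α)} (hO : ∀ k, IsOpen (O k))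
    (hmeet : ∀ V, IsOpen V → V.Nonempty → ∀ᶠ k in atTop, (V ∩ O k).Nonempty) :
    ∃ m k : ℕ → ℕ, StrictMono m ∧ StrictMono k ∧ ∀ J : Set ℕ, J.Infinite → ∀ d,
      ∃ c ∈ G, EqOn c d (blocks m J)ᶜ ∧ ∀ i ∈ J, c ∈ O (k i) := by
  obtain ⟨W, hWanti, hWo, hWd, hWG⟩ := exists_antitone_isOpen_dense_of_mem_residual hG
  choose K hK next hnext hstep using fun a =>
    exists_forall_exists_cylinder_subset (hWo a) (hWd a) hO hmeet a
  let m : ℕ → ℕ := fun i => next^[i] 0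
  have hm_succ (i : ℕ) : m (i + 1) = next (m i) := Function.iterate_succ_apply' next i 0
  have hKm (i : ℕ) : K (m i) < m (i + 1) := hm_succ i ▸ hnext (m i)
  have hm : StrictMono m := strictMono_nat_of_lt_succ fun i => (hK (m i)).trans_lt (hKm i)
  refine ⟨m, fun i => K (m i), hm,
    strictMono_nat_of_lt_succ fun i => (hKm i).trans_le (hK (m (i + 1))), fun J hJ d => ?_⟩
  obtain ⟨c, hcd, hc⟩ := exists_eqOn_compl_blocks_forall_mem hm
    (Q := fun i => W (m i) ∩ O (K (m i))) (fun i => hm_succ i ▸ hstep (m i)) J d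
  refine ⟨c, hWG (mem_iInter.2 fun l => ?_), hcd, fun i hi => (hc i hi).2⟩
  obtain ⟨i, hiJ, hli⟩ := hJ.exists_gt l
  exact hWanti (hli.le.trans hm.le_apply) (hc i hiJ).1

theorem exists_strictMono_forall_eqOn_compl_blocks {β : Type*} [TopologicalSpace β]
    [DiscreteTopology β] {ψ : (ℕ → α) → ℕ → β} {G : Set (ℕ → α)} (hψ : ContinuousOn ψ G)
    (hG : G ∈ residual (ℕ → α)) {b : β}
    (hmeet : ∀ V, IsOpen V → V.Nonempty → ∀ᶠ k in atTop, ∃ c ∈ V ∩ G, ψ c k = b) :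
    ∃ m k : ℕ → ℕ, StrictMono m ∧ StrictMono k ∧ ∀ J : Set ℕ, J.Infinite → ∀ d,
      ∃ c, EqOn c d (blocks m J)ᶜ ∧ ∀ i ∈ J, ψ c (k i) = b := by
  have hopen (k : ℕ) : ∃ O, IsOpen O ∧ (ψ · k) ⁻¹' {b} ∩ G = O ∩ G :=
    continuousOn_iff'.1 (continuousOn_pi.1 hψ k) {b} (isOpen_discrete _)
  choose O hO hOG using hopen
  have hmem {c : ℕ → α} (hc : c ∈ G) (k : ℕ) : c ∈ O k ↔ ψ c k = b :=
    (and_iff_left hc).symm.trans ((Set.ext_iff.1 (hOG k) c).symm.trans (and_iff_left hc))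
  have hmeetO (V : Set (ℕ → α)) (hV : IsOpen V) (hne : V.Nonempty) :
      ∀ᶠ k in atTop, (V ∩ O k).Nonempty := by
    filter_upwards [hmeet V hV hne] with k ⟨c, ⟨hcV, hcG⟩, hck⟩
    exact ⟨c, hcV, (hmem hcG k).2 hck⟩
  obtain ⟨m, k, hm, hk, hJ⟩ :=
    exists_strictMono_forall_mem_residual_eqOn_compl_blocks hG hO hmeetO
  refine ⟨m, k, hm, hk, fun J hJinf d => ?_⟩
  obtain ⟨c, hcG, hcd, hc⟩ := hJ J hJinf d
  exact ⟨c, hcd, fun i hi => (hmem hcG (k i)).1 (hc i hi)⟩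

end FiniteAlphabet

section Tukey

variable {ψ : (ℕ → Bool) → ℕ → Bool}

theorem exists_splits_not_splits_of_forall_eq {G V : Set (ℕ → Bool)}
    (hG : G ∈ residual (ℕ → Bool)) (hV : IsOpen V) (hne : V.Nonempty) {K : Set ℕ} {b : Bool}
    (hK : ∀ k ∈ K, ∀ c ∈ V ∩ G, ψ c k = b) {ι : Type*} [Countable ι] {B : ι → Set ℕ}
    (hB : ∀ i, (B i).Infinite) : ∃ c, (∀ i, Splits c (B i)) ∧ ¬ Splits (ψ c) K := by
  obtain ⟨c, hcV, hcG, hcB⟩ := (dense_of_mem_residual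
    (inter_mem hG (eventually_residual_forall_splits hB))).inter_open_nonempty V hV hne
  exact ⟨c, hcB, not_splits_of_forall_eq fun k hk => hK k hk c ⟨hcV, hcG⟩⟩

theorem exists_splits_not_splits_of_blocks {m k : ℕ → ℕ} (hm : Monotone m) {b : Bool}
    (hψ : ∀ J : Set ℕ, J.Infinite → ∀ d, ∃ c, EqOn c d (blocks m J)ᶜ ∧ ∀ i ∈ J, ψ c (k i) = b)
    {ι κ : Type*} [Fintype ι] [Fintype κ] (hcard : Fintype.card κ < Fintype.card ι)
    {J : ι → Set ℕ} (hJ : ∀ j, (J j).Infinite) (hdisj : Pairwise (Disjoint on J))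
    {B : κ → Set ℕ} (hB : ∀ i, (B i).Infinite) :
    ∃ c, (∀ i, Splits c (B i)) ∧ ∃ j, ¬ Splits (ψ c) (k '' J j) := by
  obtain ⟨j, hj⟩ := exists_forall_infinite_sdiff hcard hB (D := fun j => blocks m (J j))
    fun _ _ hne => disjoint_blocks hm (hdisj hne)
  obtain ⟨d, hd⟩ := (dense_of_mem_residual (eventually_residual_forall_splits hj)).nonempty
  obtain ⟨c, hcd, hc⟩ := hψ (J j) (hJ j) d
  exact ⟨c, fun i => (hd i).of_sdiff_of_eqOn_compl hcd, j,
    not_splits_of_forall_eq (forall_mem_image.2 hc)⟩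

theorem exists_infinite_forall_exists_splits_not_splits {G : Set (ℕ → Bool)}
    (hψ : ContinuousOn ψ G) (hG : G ∈ residual (ℕ → Bool)) (n : ℕ) :
    ∃ A : Fin (n + 1) → Set ℕ, (∀ j, (A j).Infinite) ∧
      ∀ B : Fin n → Set ℕ, (∀ i, (B i).Infinite) →
        ∃ c, (∀ i, Splits c (B i)) ∧ ∃ j, ¬ Splits (ψ c) (A j) := by
  by_cases hmeet : ∀ V, IsOpen V → V.Nonempty → ∀ᶠ k in atTop, ∃ c ∈ V ∩ G, ψ c k = false
  · obtain ⟨m, k, hm, hk, hmod⟩ := exists_strictMono_forall_eqOn_compl_blocks hψ hG hmeet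
    let J : Fin (n + 1) → Set ℕ := fun j => {i | i % (n + 1) = j}
    have hJ (j : Fin (n + 1)) : (J j).Infinite :=
      Nat.frequently_atTop_iff_infinite.1 (Nat.frequently_mod_eq j.2)
    have hdisj : Pairwise (Disjoint on J) := fun j j' hne =>
      disjoint_left.2 fun _ hi hi' => hne (Fin.ext (hi.symm.trans hi'))
    exact ⟨fun j => k '' J j, fun j => (hJ j).image hk.injective.injOn, fun B hB =>
      exists_splits_not_splits_of_blocks hm.monotone hmod (by simp) hJ hdisj hB⟩
  · push Not at hmeet
    obtain ⟨V, hV, hne, hfreq⟩ := hmeet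
    let K : Set ℕ := {k | ∀ c ∈ V ∩ G, ψ c k ≠ false}
    have hK : K.Infinite := Nat.frequently_atTop_iff_infinite.1 hfreq
    refine ⟨fun _ => K, fun _ => hK, fun B hB => ?_⟩
    obtain ⟨c, hcB, hcK⟩ := exists_splits_not_splits_of_forall_eq (K := K) hG hV hne
      (fun _ hk c hc => Bool.eq_true_of_not_eq_false (hk c hc)) hB
    exact ⟨c, hcB, 0, hcK⟩

end Tukey

/-- For every `n ≥ 1`, no function `ψ : 2^ℕ → 2^ℕ` that is continuous on some
comeager set carries every `n`-splitting family to an `(n+1)`-splitting family.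
(No Borel Tukey morphism from 𝔰_n to 𝔰_{n+1}.) -/
theorem stmt12 (n : ℕ) (hn : 1 ≤ n) :
    ¬ ∃ ψ : (ℕ → Bool) → (ℕ → Bool),
      (∃ G : Set (ℕ → Bool), G ∈ residual (ℕ → Bool) ∧ ContinuousOn ψ G) ∧
      ∀ S : Set (ℕ → Bool), NSplitting n S → NSplitting (n + 1) (ψ '' S) := by
  rintro ⟨ψ, ⟨G, hG, hψ⟩, hS⟩
  obtain ⟨A, hA, hAB⟩ := exists_infinite_forall_exists_splits_not_splits hψ hG n
  let S : Set (ℕ → Bool) := {c | ∃ j, ¬ Splits (ψ c) (A j)}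
  have hSn : NSplitting n S := fun B hB =>
    let ⟨c, hcB, hcS⟩ := hAB B hB
    ⟨c, hcS, hcB⟩
  obtain ⟨_, ⟨c, ⟨j, hj⟩, rfl⟩, hc⟩ := hS S hSn A hA
  exact hj (hc j)
end

section
/- Let 1 ≤ m' ≤ m, m ≤ n, m' ≤ n', and let r be the remainder upon dividing n by n'. If ⌊n/n'⌋·(m'−1) + min(r, m'−1) < m, then every (n,m)-splitting family S ⊆ 2^ℕ is also an (n',m')-splitting family. (Hence the identity maps form a Borel Tukey morphism from 𝔰_{n,m} to 𝔰_{n',m'} in this case.) -/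
/-- `S ⊆ 2^ℕ` is an `(n,m)`-splitting family: for all infinite
`A_1, …, A_n ⊆ ℕ` some `c ∈ S` splits at least `m` of the `A_i`. -/
def NMSplitting (n m : ℕ) (S : Set (ℕ → Bool)) : Prop :=
  ∀ A : Fin n → Set ℕ, (∀ i, (A i).Infinite) →
    ∃ c ∈ S, m ≤ {i : Fin n | Splits c (A i)}.ncard

/-!
Given `n'` infinite sets, list them cyclically as `n` sets, the `i`-th of the new list being the
old set with index `i % n'`. Each old set is then listed `⌊n/n'⌋` times, and those with index less
than `n % n'` once more. So a colouring that splits at most `m' - 1` of the `n'` sets splits at most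
`⌊n/n'⌋ * (m' - 1) + min (n % n') (m' - 1)` of the `n` sets.
-/

section Counting

open Finset

theorem card_filter_fin_val (p : ℕ → Prop) [DecidablePred p] (n : ℕ) :
    #{i : Fin n | p i} = n.count p := by
  rw [Nat.count_eq_card_filter_range, ← Nat.Iio_eq_range, ← Fin.map_valEmbedding_univ, filter_map,
    card_map]
  rfl

theorem card_filter_ofNat_eq (n : ℕ) {d : ℕ} [NeZero d] (j : Fin d) :
    #{i : Fin n | Fin.ofNat d i = j} = n / d + if j < n % d then 1 else 0 := by
  have ofNat_eq_iff (i : Fin n) : Fin.ofNat d i = j ↔ i ≡ j [MOD d] := by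
    rw [Fin.ext_iff, Fin.val_ofNat, Nat.ModEq, Nat.mod_eq_of_lt j.isLt]
  simp only [ofNat_eq_iff]
  rw [card_filter_fin_val (· ≡ j [MOD d]), Nat.count_modEq_card n (NeZero.pos d),
    Nat.mod_eq_of_lt j.isLt]

theorem card_filter_ofNat_mem (n : ℕ) {d : ℕ} [NeZero d] (T : Finset (Fin d)) :
    #{i : Fin n | Fin.ofNat d i ∈ T} = n / d * #T + #{j ∈ T | j.val < n % d} :=
  calc
    #{i : Fin n | Fin.ofNat d i ∈ T} = ∑ j ∈ T, #{i : Fin n | Fin.ofNat d i = j} :=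
      (sum_card_fiberwise_eq_card_filter _ _ _).symm
    _ = n / d * #T + #{j ∈ T | j.val < n % d} := by
      simp only [card_filter_ofNat_eq, sum_add_distrib, sum_const, smul_eq_mul]
      rw [mul_comm, card_filter]

theorem ncard_preimage_ofNat_le (n : ℕ) {d : ℕ} [NeZero d] (T : Set (Fin d)) :
    ((fun i : Fin n ↦ Fin.ofNat d i) ⁻¹' T).ncard ≤ n / d * T.ncard + min (n % d) T.ncard := by
  classical
  lift T to Finset (Fin d) using T.toFinite
  have card_lt_le : #{j ∈ T | j.val < n % d} ≤ n % d :=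
    calc
      #{j ∈ T | j.val < n % d} ≤ #{j : Fin d | j < n % d} :=
        card_le_card (filter_subset_filter _ (subset_univ T))
      _ ≤ n % d := by rw [Fin.card_filter_val_lt]; exact min_le_right _ _
  calc
    ((fun i : Fin n ↦ Fin.ofNat d i) ⁻¹' T).ncard = #{i : Fin n | Fin.ofNat d i ∈ T} := by
      rw [← Set.ncard_coe_finset, coe_filter_univ]; rfl
    _ = n / d * #T + #{j ∈ T | j.val < n % d} := card_filter_ofNat_mem n T
    _ ≤ n / d * #T + min (n % d) #T := by gcongr; exact le_min card_lt_le (card_filter_le _ _)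
    _ = n / d * (T : Set (Fin d)).ncard + min (n % d) (T : Set (Fin d)).ncard := by
      rw [Set.ncard_coe_finset]

end Counting

theorem NMSplitting.of_ncard_preimage_lt {n m n' m' : ℕ} {S : Set (ℕ → Bool)}
    (hS : NMSplitting n m S) (f : Fin n → Fin n')
    (hf : ∀ T : Set (Fin n'), T.ncard < m' → (f ⁻¹' T).ncard < m) : NMSplitting n' m' S := by
  intro A hA
  obtain ⟨c, hcS, hc⟩ := hS (A ∘ f) fun i ↦ hA (f i)
  exact ⟨c, hcS, not_lt.1 fun hlt ↦ (hf _ hlt).not_ge hc⟩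

/-- Let `1 ≤ m' ≤ m ≤ n` and `m' ≤ n'` and let `r = n % n'`.  If
`⌊n/n'⌋·(m'−1) + min(r, m'−1) < m`, then every `(n,m)`-splitting family is an
`(n',m')`-splitting family.  (The identity is a Borel Tukey morphism from
𝔰_{n,m} to 𝔰_{n',m'}.) -/
theorem stmt16 (m n m' n' : ℕ) (hm' : 1 ≤ m') (hm'm : m' ≤ m) (hmn : m ≤ n)
    (hm'n' : m' ≤ n')
    (hcond : (n / n') * (m' - 1) + min (n % n') (m' - 1) < m) :
    ∀ S : Set (ℕ → Bool), NMSplitting n m S → NMSplitting n' m' S := by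
  intro S hS
  have : NeZero n' := ⟨by omega⟩
  refine hS.of_ncard_preimage_lt (fun i ↦ Fin.ofNat n' i) fun T hT ↦ ?_
  have hT' : T.ncard ≤ m' - 1 := Nat.le_sub_one_of_lt hT
  calc
    ((fun i : Fin n ↦ Fin.ofNat n' i) ⁻¹' T).ncard
        ≤ n / n' * T.ncard + min (n % n') T.ncard := ncard_preimage_ofNat_le n T
    _ ≤ n / n' * (m' - 1) + min (n % n') (m' - 1) := by gcongr
    _ < m := hcond
end

section
/- For all natural numbers m, m' ≥ 3 with m ≠ m', there do not exist Borel maps φ : ([ω]^ω)^{2^{m'}} → ([ω]^ω)^{2^m} and ψ : 2^ℕ → 2^ℕ such that for every tuple (B_1, …, B_{2^{m'}}) of infinite subsets of ℕ and every c ∈ 2^ℕ: if c splits at least m of the 2^m components of φ(B_1, …, B_{2^{m'}}), then ψ(c) splits at least m' of B_1, …, B_{2^{m'}}. (I.e., the triples defining the cardinals 𝔰_{2^m, m} for m ≥ 3 form an antichain in the Borel Tukey ordering.) -/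
/-!
By the Baire property, for a generic `c` the coordinate `ψ(c)(x)` vanishes exactly when `c` lies in
an open set `O x`. For a fixed tuple `B`, a generic `c` splits every component of `φ(B)`; taking `B`
constant, `ψ(c)` splits any given infinite set for generic `c`, and therefore every nonempty open
set meets all but finitely many of the `O x`.

This allows `ℕ` to be cut into finite blocks, each carrying a point `b` and one of `2 ^ m'` colours,
such that `c` can be left free on all blocks with colour in a proper subset `I` of the colours,
while on each other block `c` is steered into `O b`; meeting infinitely many steered blocks keeps
`c` generic. Let `B i` be the set of the points `b` of colour `i`. Each component `φ(B) j` is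
infinite on the blocks of some colour `f j`, so letting `c` copy a generic real on the free blocks
makes `c` split every `φ(B) j` with `f j ∈ I`, whereas `ψ(c)` vanishes on `B i` for `i ∉ I`.

It remains to find `I` with `|I| < m'` and `|f⁻¹(I)| ≥ m`. If `m < m'`, take `I` to be the image of
any `m` indices. If `m' < m`, the `m' - 1` most popular colours have average fibre sum at least
`2 ^ m * (m' - 1) / 2 ^ m'`, which exceeds `m - 1` because `q / 2 ^ q` decreases strictly for
`q ≥ 2`.
-/

open Set Filter Topology PiNat

section Pigeonhole

lemma exists_subset_card_eq_mul_sum_le {ι R : Type*} [CommSemiring R] [LinearOrder R]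
    [IsStrictOrderedRing R] (s : Finset ι) (a : ι → R) {r : ℕ} (hr : r ≤ s.card) :
    ∃ t ⊆ s, t.card = r ∧ r * ∑ i ∈ s, a i ≤ s.card * ∑ i ∈ t, a i := by
  classical
  induction hr using Nat.decreasingInduction with
  | self => exact ⟨s, subset_rfl, rfl, le_rfl⟩
  | of_succ r _ ih =>
    obtain ⟨t, hts, htr, ht⟩ := ih
    -- Removing a smallest term does not lower the average.
    obtain ⟨i, hi, hmin⟩ := t.exists_min_image a (Finset.card_pos.1 (by omega))
    have hcard : (t.erase i).card = r := by rw [Finset.card_erase_of_mem hi, htr]; rfl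
    have herase : r * ∑ j ∈ t, a j ≤ (r + 1) * ∑ j ∈ t.erase i, a j := by
      have hle : r * a i ≤ ∑ j ∈ t.erase i, a j := by
        simpa only [hcard, nsmul_eq_mul] using
          (t.erase i).card_nsmul_le_sum a (a i) fun j hj => hmin j (Finset.mem_of_mem_erase hj)
      rw [← Finset.add_sum_erase t a hi, mul_add, add_one_mul, add_comm]
      gcongr
    refine ⟨t.erase i, (t.erase_subset i).trans hts, hcard,
      le_of_mul_le_mul_left ?_ (Nat.cast_add_one_pos (α := R) r)⟩
    calc (r + 1 : R) * (r * ∑ j ∈ s, a j)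
        = r * ((r + 1 : ℕ) * ∑ j ∈ s, a j) := by push_cast; ring
      _ ≤ r * (s.card * ∑ j ∈ t, a j) := by gcongr
      _ = s.card * (r * ∑ j ∈ t, a j) := by ring
      _ ≤ s.card * ((r + 1) * ∑ j ∈ t.erase i, a j) := by gcongr
      _ = (r + 1) * (s.card * ∑ j ∈ t.erase i, a j) := by ring

variable {ι κ : Type*} [Finite κ]

lemma exists_ncard_le_ncard_preimage (f : κ → ι) {m : ℕ} (hm : m ≤ Nat.card κ) :
    ∃ I : Set ι, I.ncard ≤ m ∧ m ≤ (f ⁻¹' I).ncard := by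
  obtain ⟨J, -, rfl⟩ := (univ : Set κ).exists_subset_card_eq (hm.trans_eq (ncard_univ κ).symm)
  exact ⟨f '' J, ncard_image_le, ncard_le_ncard (subset_preimage_image f J)⟩

lemma exists_ncard_eq_lt_ncard_preimage [Finite ι] (f : κ → ι) {k r : ℕ} (hr : r ≤ Nat.card ι)
    (hk : k * Nat.card ι < r * Nat.card κ) :
    ∃ I : Set ι, I.ncard = r ∧ k < (f ⁻¹' I).ncard := by
  have := Classical.decEq ι
  cases nonempty_fintype ι
  cases nonempty_fintype κ
  simp only [Nat.card_eq_fintype_card] at hr hk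
  obtain ⟨I, -, rfl, hI⟩ :=
    exists_subset_card_eq_mul_sum_le Finset.univ (fun i => Finset.card {j | f j = i}) hr
  simp only [Finset.sum_card_fiberwise_eq_card_filter, Finset.mem_univ, Finset.filter_true,
    Finset.card_univ, Nat.cast_id] at hI
  have hpre : (f ⁻¹' I).ncard = Finset.card {j | f j ∈ I} := by
    rw [← ncard_coe_finset, Finset.coe_filter_univ]; rfl
  refine ⟨I, ncard_coe_finset I, lt_of_mul_lt_mul_left ?_ (Fintype.card ι).zero_le⟩
  rw [hpre]
  linarith

lemma mul_two_pow_lt {p q : ℕ} (hp : 2 ≤ p) (hpq : p < q) : q * 2 ^ p < p * 2 ^ q := by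
  induction q, hpq using Nat.le_induction with
  | base =>
    calc (p + 1) * 2 ^ p < (p * 2) * 2 ^ p := by gcongr; omega
      _ = p * 2 ^ (p + 1) := by ring
  | succ q hq ih =>
    calc (q + 1) * 2 ^ p ≤ (q * 2) * 2 ^ p := by gcongr; omega
      _ = (q * 2 ^ p) * 2 := by ring
      _ < (p * 2 ^ q) * 2 := by gcongr
      _ = p * 2 ^ (q + 1) := by ring

lemma exists_ncard_lt_le_ncard_preimage {m m' : ℕ} (hm' : 3 ≤ m') (hne : m ≠ m')
    (f : Fin (2 ^ m) → Fin (2 ^ m')) :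
    ∃ I : Set (Fin (2 ^ m')), I.ncard < m' ∧ m ≤ (f ⁻¹' I).ncard := by
  obtain hlt | hgt := hne.lt_or_gt
  · obtain ⟨I, hI, hIm⟩ := exists_ncard_le_ncard_preimage f (m := m)
      (by simpa using Nat.lt_two_pow_self.le)
    exact ⟨I, hI.trans_lt hlt, hIm⟩
  · obtain ⟨p, rfl⟩ := Nat.exists_eq_add_of_le' (by omega : 1 ≤ m')
    obtain ⟨q, rfl⟩ := Nat.exists_eq_add_of_le' (by omega : 1 ≤ m)
    obtain ⟨I, hI, hIm⟩ := exists_ncard_eq_lt_ncard_preimage f (k := q) (r := p)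
      (by simpa using (Nat.lt_two_pow_self.trans (Nat.pow_lt_pow_succ one_lt_two)).le)
      (by have := mul_two_pow_lt (p := p) (q := q) (by omega) (by omega)
          simp only [Nat.card_fin, pow_succ]; linarith)
    exact ⟨I, by omega, hIm⟩

lemma exists_infinite_inter_fiber {α β : Type*} [Finite β] {A : Set α} (hA : A.Infinite)
    (p : α → β) : ∃ i, (A ∩ p ⁻¹' {i}).Infinite := by
  by_contra! h
  exact hA ((finite_iUnion h).subset fun n hn => mem_iUnion.2 ⟨p n, hn, rfl⟩)

lemma exists_infinite_fibers (ι : Type*) [Nonempty ι] [Countable ι] :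
    ∃ col : ℕ → ι, ∀ i, (col ⁻¹' {i}).Infinite := by
  obtain ⟨g, hg⟩ := exists_surjective_nat ι
  refine ⟨fun k => g k.unpair.1, fun i => ?_⟩
  obtain ⟨a, rfl⟩ := hg i
  exact infinite_of_injective_forall_mem (f := Nat.pair a)
    (fun x y hxy => (Nat.pair_eq_pair.1 hxy).2) fun x => by simp

end Pigeonhole

lemma exists_mem_Ico_of_strictMono {l : ℕ → ℕ} (hl : StrictMono l) (hl0 : l 0 = 0) (n : ℕ) :
    ∃ k, n ∈ Ico (l k) (l (k + 1)) := by
  have hcover := iUnion_Ico_map_succ_eq_Ici (f := l) (fun k => hl.monotone bot_le)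
    hl.not_bddAbove_range_of_isSuccArchimedean
  exact mem_iUnion.1 (hcover.ge (by simp [hl0]))

/-- A sequence of sets is eventually dense if every nonempty open set meets all but finitely many
of its members: the property of the sets `O x` that lets a generic `c` be steered into them. -/
def EventuallyDense {X : Type*} [TopologicalSpace X] (O : ℕ → Set X) : Prop :=
  ∀ V, IsOpen V → V.Nonempty → ∀ᶠ x in atTop, (V ∩ O x).Nonempty

section Cylinder

variable {E : ℕ → Type*}

lemma finite_range_cylinder_s18 [∀ n, Finite (E n)] (l : ℕ) :
    (range fun x : ∀ n, E n => cylinder x l).Finite := by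
  refine (finite_range fun r : ∀ i : Fin l, E i =>
    {y : ∀ n, E n | ∀ i : Fin l, y i = r i}).subset ?_
  rintro _ ⟨x, rfl⟩
  exact ⟨fun i => x i, by ext y; simp [mem_cylinder_iff, Fin.forall_iff]⟩

lemma eventually_forall_cylinder_s18 [∀ n, Finite (E n)] {α : Type*} {F : Filter α} {l : ℕ}
    {P : Set (∀ n, E n) → α → Prop} (h : ∀ s, ∀ᶠ a in F, P (cylinder s l) a) :
    ∀ᶠ a in F, ∀ s, P (cylinder s l) a := by
  simpa only [forall_mem_range] using
    (eventually_all_finite (finite_range_cylinder_s18 l)).2 (forall_mem_range.2 h)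

lemma exists_forall_mem_cylinder_s18 {g : ℕ → ∀ n, E n} {l : ℕ → ℕ} (hl : StrictMono l)
    (hg : ∀ k, g (k + 1) ∈ cylinder (g k) (l k)) : ∃ c, ∀ k, c ∈ cylinder (g k) (l k) := by
  have hmono {j k : ℕ} (hjk : j ≤ k) : g k ∈ cylinder (g j) (l j) := by
    induction k, hjk using Nat.le_induction with
    | base => exact self_mem_cylinder _ _
    | succ k hjk ih =>
      rw [← mem_cylinder_iff_eq.1 ih]
      exact cylinder_anti _ (hl.monotone hjk) (hg k)
  refine ⟨fun n => g (n + 1) n, fun k n hn => ?_⟩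
  obtain hkn | hkn := le_total k (n + 1)
  · exact hmono hkn n hn
  · exact (hmono hkn n ((Nat.lt_succ_self n).trans_le hl.le_apply)).symm

lemma exists_forall_exists_mem_cylinder {l : ℕ → ℕ} (hl : StrictMono l)
    {T : ℕ → (∀ n, E n) → ∀ n, E n} (hT : ∀ k s, T k s ∈ cylinder s (l k)) (x : ∀ n, E n) :
    ∃ c, ∀ k, ∃ s, c ∈ cylinder (T k s) (l (k + 1)) := by
  let g : ℕ → ∀ n, E n := Nat.rec x T
  obtain ⟨c, hc⟩ := exists_forall_mem_cylinder_s18 (g := g) hl fun k => hT k (g k)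
  exact ⟨c, fun k => ⟨g k, hc (k + 1)⟩⟩

variable [∀ n, TopologicalSpace (E n)] [∀ n, DiscreteTopology (E n)]

lemma exists_cylinder_subset_of_isOpen_s18 {V : Set (∀ n, E n)} (hV : IsOpen V) {x : ∀ n, E n}
    (hx : x ∈ V) : ∃ n, cylinder x n ⊆ V := by
  obtain ⟨_, ⟨y, n, rfl⟩, hxy, hyV⟩ :=
    (isTopologicalBasis_cylinders E).exists_subset_of_mem_open hx hV
  exact ⟨n, (mem_cylinder_iff_eq.1 hxy).trans_subset hyV⟩

lemma eventually_residual_infinite_eq {A : Set ℕ} (hA : A.Infinite) (x : ∀ n, E n) :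
    ∀ᵇ c : ∀ n, E n, {k ∈ A | c k = x k}.Infinite := by
  have hres (N : ℕ) : ∀ᵇ c : ∀ n, E n, ∃ k > N, k ∈ A ∧ c k = x k := by
    refine residual_of_dense_open ?_ (dense_iff_inter_open.2 ?_)
    · simp only [ofPred_exists, ofPred_and]
      exact isOpen_iUnion fun k => isOpen_const.inter <| isOpen_const.inter <|
        (isOpen_discrete {x k}).preimage (continuous_apply k)
    · rintro V hV ⟨y, hy⟩
      obtain ⟨n, hn⟩ := exists_cylinder_subset_of_isOpen_s18 hV hy
      obtain ⟨k, hkA, hk⟩ := hA.exists_gt (max n N)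
      refine ⟨Function.update y k (x k), hn ?_, k, (le_max_right n N).trans_lt hk, hkA, by simp⟩
      exact cylinder_anti y ((le_max_left n N).trans hk.le) (update_mem_cylinder y k (x k))
  filter_upwards [eventually_countable_forall.2 hres] with c hc
  exact infinite_of_forall_exists_gt fun N => (hc N).imp fun k hk => ⟨hk.2, hk.1⟩

variable [∀ n, Finite (E n)] {O : ℕ → Set (∀ n, E n)}

lemma exists_forall_exists_cylinder_subset_s18 (hO : ∀ x, IsOpen (O x))
    (hOd : EventuallyDense O) {W : Set (∀ n, E n)} (hW : IsOpen W) (hWd : Dense W) (l x₀ : ℕ) :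
    ∃ l' > l, ∃ b > x₀, ∀ s, ∃ t ∈ cylinder s l, cylinder t l' ⊆ O b ∩ W := by
  have hb : ∀ᶠ b in atTop, ∀ s, (cylinder s l ∩ O b).Nonempty :=
    eventually_forall_cylinder_s18 (P := fun C b => (C ∩ O b).Nonempty) fun s =>
      hOd _ (isOpen_cylinder E s l) ⟨s, self_mem_cylinder s l⟩
  obtain ⟨b, hb, hbx⟩ := (hb.and (eventually_gt_atTop x₀)).exists
  have hl' : ∀ᶠ l' in atTop, ∀ s, ∃ t ∈ cylinder s l, cylinder t l' ⊆ O b ∩ W := by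
    refine eventually_forall_cylinder_s18
      (P := fun C l' => ∃ t ∈ C, cylinder t l' ⊆ O b ∩ W) fun s => ?_
    obtain ⟨t, ⟨hts, htO⟩, htW⟩ :=
      hWd.inter_open_nonempty _ ((isOpen_cylinder E s l).inter (hO b)) (hb s)
    obtain ⟨n, hn⟩ := exists_cylinder_subset_of_isOpen_s18 ((hO b).inter hW) ⟨htO, htW⟩
    filter_upwards [eventually_ge_atTop n] with l' hnl'
    exact ⟨t, hts, (cylinder_anti t hnl').trans hn⟩
  obtain ⟨l', hl', hll'⟩ := (hl'.and (eventually_gt_atTop l)).exists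
  exact ⟨l', hll', b, hbx, hl'⟩

lemma exists_strictMono_forall_exists_cylinder_subset (hO : ∀ x, IsOpen (O x))
    (hOd : EventuallyDense O) {W : ℕ → Set (∀ n, E n)} (hW : ∀ k, IsOpen (W k))
    (hWd : ∀ k, Dense (W k)) :
    ∃ l b : ℕ → ℕ, l 0 = 0 ∧ StrictMono l ∧ StrictMono b ∧
      ∀ k s, ∃ t ∈ cylinder s (l k), cylinder t (l (k + 1)) ⊆ O (b k) ∩ W k := by
  choose l' hl' b' hb' hlb using fun k =>
    exists_forall_exists_cylinder_subset_s18 hO hOd (hW k) (hWd k)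
  let q : ℕ → ℕ × ℕ := Nat.rec (0, 0) fun k p => (l' k p.1 p.2, b' k p.1 p.2)
  exact ⟨fun k => (q k).1, fun k => (q (k + 1)).2, rfl,
    strictMono_nat_of_lt_succ fun k => hl' k _ _,
    strictMono_nat_of_lt_succ fun k => hb' (k + 1) _ _, fun k => hlb k _ _⟩

lemma exists_steerable_blocks (hO : ∀ x, IsOpen (O x)) (hOd : EventuallyDense O)
    {D : Set (∀ n, E n)} (hD : D ∈ residual (∀ n, E n)) :
    ∃ p b : ℕ → ℕ, StrictMono b ∧ ∀ F : Set ℕ, Fᶜ.Infinite → ∀ e : ∀ n, E n,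
      ∃ c ∈ D, (∀ n, p n ∈ F → c n = e n) ∧ ∀ k ∉ F, c ∈ O (b k) := by
  classical
  obtain ⟨G, hGD, hGδ, hGd⟩ := mem_residual.1 hD
  obtain ⟨U, hU, rfl⟩ := hGδ.eq_iInter_nat
  obtain ⟨l, b, hl0, hl, hb, hstep⟩ := exists_strictMono_forall_exists_cylinder_subset hO hOd
    (W := dissipate U) (fun k => (finite_le_nat k).isOpen_biInter fun j _ => hU j)
    (fun k => hGd.mono (iInter_subset_dissipate k))
  choose t ht htO using hstep
  choose p hp using exists_mem_Ico_of_strictMono hl hl0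
  refine ⟨p, b, hb, fun F hF e => ?_⟩
  let T : ℕ → (∀ n, E n) → ∀ n, E n := fun k s =>
    if k ∈ F then fun n => if n < l k then s n else e n else t k s
  have hT (k : ℕ) (s : ∀ n, E n) : T k s ∈ cylinder s (l k) := by
    by_cases hk : k ∈ F
    · intro n hn
      simp only [T, hk, hn, if_true]
    · simpa only [T, hk, if_false] using ht k s
  obtain ⟨c, hc⟩ := exists_forall_exists_mem_cylinder hl hT e
  have hsteer {k : ℕ} (hk : k ∉ F) : c ∈ O (b k) ∩ dissipate U k := by
    obtain ⟨s, hs⟩ := hc k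
    simp only [T, hk, if_false] at hs
    exact htO k s hs
  refine ⟨c, hGD (mem_iInter.2 fun n => ?_), fun n hn => ?_, fun k hk => (hsteer hk).1⟩
  · obtain ⟨k, hk, hnk⟩ := hF.exists_gt n
    exact dissipate_subset hnk.le (hsteer hk).2
  · obtain ⟨s, hs⟩ := hc (p n)
    simpa only [T, hn, (hp n).1.not_gt, if_true, if_false] using hs n (hp n).2

lemma exists_colored_steerable_blocks (ι : Type*) [Nonempty ι] [Countable ι]
    (hO : ∀ x, IsOpen (O x)) (hOd : EventuallyDense O) {D : Set (∀ n, E n)}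
    (hD : D ∈ residual (∀ n, E n)) :
    ∃ (S : ι → Set ℕ) (p : ℕ → ι), (∀ i, (S i).Infinite) ∧
      ∀ I : Set ι, I ≠ univ → ∀ e : ∀ n, E n, ∃ c ∈ D,
        (∀ n, p n ∈ I → c n = e n) ∧ ∀ i ∉ I, ∀ x ∈ S i, c ∈ O x := by
  obtain ⟨col, hcol⟩ := exists_infinite_fibers ι
  obtain ⟨p, b, hb, hpb⟩ := exists_steerable_blocks hO hOd hD
  refine ⟨fun i => b '' (col ⁻¹' {i}), col ∘ p, fun i => (hcol i).image hb.injective.injOn,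
    fun I hI e => ?_⟩
  obtain ⟨i, hi⟩ := (ne_univ_iff_exists_notMem I).1 hI
  have hinf : (col ⁻¹' I)ᶜ.Infinite := (hcol i).mono fun k hk => by
    rw [mem_compl_iff, mem_preimage, show col k = i from hk]
    exact hi
  obtain ⟨c, hcD, hce, hcO⟩ := hpb _ hinf e
  refine ⟨c, hcD, hce, ?_⟩
  rintro i hi _ ⟨k, rfl, rfl⟩
  exact hcO k hi

end Cylinder

lemma exists_isOpen_forall_eq_iff {X α : Type*} [TopologicalSpace X]
    [Countable α] {ψ : X → α → Bool} (hψ : EventuallyMeasurable (borel X) (residual X) ψ)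
    (ε : Bool) : ∃ O : α → Set X, (∀ a, IsOpen (O a)) ∧ ∀ᵇ c, ∀ a, ψ c a = ε ↔ c ∈ O a := by
  have hbaire (a : α) : BaireMeasurableSet {c | ψ c a = ε} :=
    ((measurable_pi_apply a).comp_eventuallyMeasurable hψ) (measurableSet_singleton ε)
  choose O hO hψO using fun a => (hbaire a).residualEq_isOpen
  exact ⟨O, hO, eventually_countable_forall.2 fun a => eventuallyEq_set.1 (hψO a)⟩

section Splitting

lemma exists_bset_eq {A : Set ℕ} (hA : A.Infinite) : ∃ x : InfC, bset x.1 = A := by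
  classical
  have hbset : bset (fun n => decide (n ∈ A)) = A := by ext n; simp [bset]
  exact ⟨⟨_, hbset.symm ▸ hA⟩, hbset⟩

lemma Splits.mono {c : ℕ → Bool} {A B : Set ℕ} (h : Splits c A) (hAB : A ⊆ B) : Splits c B :=
  ⟨h.1.mono fun _ hk => ⟨hAB hk.1, hk.2⟩, h.2.mono fun _ hk => ⟨hAB hk.1, hk.2⟩⟩

lemma Splits.congr {c e : ℕ → Bool} {A : Set ℕ} (h : Splits e A) (hce : EqOn c e A) :
    Splits c A :=
  ⟨h.1.mono fun _ hk => ⟨hk.1, (hce hk.1).trans hk.2⟩,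
    h.2.mono fun _ hk => ⟨hk.1, (hce hk.1).trans hk.2⟩⟩

lemma not_splits_of_forall_eq_false {c : ℕ → Bool} {A : Set ℕ} (h : ∀ k ∈ A, c k = false) :
    ¬ Splits c A := fun hc => by
  obtain ⟨k, hk, hck⟩ := hc.2.nonempty
  simp [h k hk] at hck

lemma eventually_residual_splits {A : Set ℕ} (hA : A.Infinite) : ∀ᵇ c, Splits c A :=
  (eventually_residual_infinite_eq hA _).and (eventually_residual_infinite_eq hA _)

/-- `(φ, ψ)` is a Tukey connection between the triples defining `𝔰_{|κ|,m}` and `𝔰_{|ι|,m'}`, with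
no definability requirement: `φ` acts on the `ι`-tuples of infinite sets, `ψ` on the reals meant
to split them. -/
def IsTukeyConnection {ι κ : Type*} (m m' : ℕ) (φ : (ι → InfC) → κ → InfC)
    (ψ : (ℕ → Bool) → ℕ → Bool) : Prop :=
  ∀ B c, m ≤ {j | Splits c (bset (φ B j).1)}.ncard → m' ≤ {i | Splits (ψ c) (bset (B i).1)}.ncard

variable {ι κ : Type*} [Finite κ] {m m' : ℕ} {φ : (ι → InfC) → κ → InfC}
  {ψ : (ℕ → Bool) → ℕ → Bool}

namespace IsTukeyConnection

lemma eventually_residual_le_ncard (h : IsTukeyConnection m m' φ ψ) (hm : m ≤ Nat.card κ)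
    (B : ι → InfC) : ∀ᵇ c, m' ≤ {i | Splits (ψ c) (bset (B i).1)}.ncard := by
  filter_upwards [eventually_countable_forall.2 fun j => eventually_residual_splits (φ B j).2]
    with c hc
  exact h B c (by simpa [hc])

lemma le_card [Finite ι] (h : IsTukeyConnection m m' φ ψ) (hm : m ≤ Nat.card κ) :
    m' ≤ Nat.card ι := by
  obtain ⟨x, -⟩ := exists_bset_eq infinite_univ
  obtain ⟨c, hc⟩ := (dense_of_mem_residual (h.eventually_residual_le_ncard hm fun _ => x)).nonempty
  exact hc.trans (ncard_le_card _)

lemma eventually_residual_splits (h : IsTukeyConnection m m' φ ψ) (hm : m ≤ Nat.card κ)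
    (hm' : 0 < m') {A : Set ℕ} (hA : A.Infinite) : ∀ᵇ c, Splits (ψ c) A := by
  obtain ⟨x, rfl⟩ := exists_bset_eq hA
  filter_upwards [h.eventually_residual_le_ncard hm fun _ => x] with c hc
  obtain ⟨_, hi⟩ := nonempty_of_ncard_ne_zero (hm'.trans_le hc).ne'
  exact hi

lemma eventuallyDense (h : IsTukeyConnection m m' φ ψ) (hm : m ≤ Nat.card κ)
    (hm' : 0 < m') {O : ℕ → Set (ℕ → Bool)} (hO : ∀ᵇ c, ∀ x, ψ c x = false ↔ c ∈ O x) :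
    EventuallyDense O := by
  intro V hV hVne
  by_contra hfreq
  have hA : {x | ¬ (V ∩ O x).Nonempty}.Infinite :=
    Nat.frequently_atTop_iff_infinite.1 (not_eventually.1 hfreq)
  obtain ⟨c, hcV, hc, hcO⟩ := (dense_of_mem_residual
    ((h.eventually_residual_splits hm hm' hA).and hO)).inter_open_nonempty V hV hVne
  obtain ⟨x, hx, hψx⟩ := hc.1.nonempty
  exact hx ⟨c, hcV, (hcO x).1 hψx⟩

end IsTukeyConnection

theorem stmt18_general [Finite ι] [Nonempty ι]
    (hf : ∀ f : κ → ι, ∃ I : Set ι, I.ncard < m' ∧ m ≤ (f ⁻¹' I).ncard) :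
    ¬ ∃ (φ : (ι → InfC) → κ → InfC) (ψ : (ℕ → Bool) → ℕ → Bool),
      EventuallyMeasurable (borel _) (residual _) ψ ∧ IsTukeyConnection m m' φ ψ := by
  rintro ⟨φ, ψ, hψ, h⟩
  obtain ⟨I₀, hI₀, hmI₀⟩ := hf fun _ => Classical.arbitrary ι
  have hm : m ≤ Nat.card κ := hmI₀.trans (ncard_le_card _)
  obtain ⟨O, hO, hψO⟩ := exists_isOpen_forall_eq_iff hψ false
  obtain ⟨S, p, hS, hp⟩ := exists_colored_steerable_blocks ι hO
    (h.eventuallyDense hm (pos_of_gt hI₀) hψO) hψO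
  choose B hB using fun i => exists_bset_eq (hS i)
  choose f hfinf using fun j => exists_infinite_inter_fiber (φ B j).2 p
  obtain ⟨I, hIm', hmI⟩ := hf f
  obtain ⟨e, he⟩ := (dense_of_mem_residual
    (eventually_countable_forall.2 fun j => eventually_residual_splits (hfinf j))).nonempty
  have hI : I ≠ univ := by
    rintro rfl
    exact hIm'.not_ge ((h.le_card hm).trans_eq (ncard_univ ι).symm)
  obtain ⟨c, hcψ, hce, hcO⟩ := hp I hI e
  have hφ : f ⁻¹' I ⊆ {j | Splits c (bset (φ B j).1)} := fun j hj =>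
    ((he j).congr fun n hn => hce n (hn.2.symm ▸ hj)).mono inter_subset_left
  have hψI : {i | Splits (ψ c) (bset (B i).1)} ⊆ I := by
    simp only [hB]
    exact fun i => not_imp_not.1 fun hi =>
      not_splits_of_forall_eq_false fun x hx => (hcψ x).2 (hcO i hi x hx)
  exact ((h B c (hmI.trans (ncard_le_ncard hφ))).trans (ncard_le_ncard hψI)).not_gt hIm'

end Splitting

/-- For `m, m' ≥ 3` with `m ≠ m'`, there are no Borel maps
`φ : ([ω]^ω)^{2^{m'}} → ([ω]^ω)^{2^m}` and `ψ : 2^ℕ → 2^ℕ` such that whenever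
`c` splits at least `m` of the `2^m` components of `φ(B)`, `ψ(c)` splits at
least `m'` of the `B_i`.  (The triples defining 𝔰_{2^m,m} for `m ≥ 3` form an
antichain in the Borel Tukey ordering.) -/
theorem stmt18 (m m' : ℕ) (hm : 3 ≤ m) (hm' : 3 ≤ m') (hne : m ≠ m') :
    ¬ ∃ (φ : (Fin (2 ^ m') → InfC) → (Fin (2 ^ m) → InfC))
        (ψ : (ℕ → Bool) → (ℕ → Bool)),
      Measurable φ ∧ Measurable ψ ∧
      ∀ (B : Fin (2 ^ m') → InfC) (c : ℕ → Bool),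
        m ≤ {i : Fin (2 ^ m) | Splits c (bset (φ B i).1)}.ncard →
        m' ≤ {i : Fin (2 ^ m') | Splits (ψ c) (bset (B i).1)}.ncard :=
  fun ⟨φ, ψ, _, hψ, h⟩ => stmt18_general (exists_ncard_lt_le_ncard_preimage hm' hne)
    ⟨φ, ψ, (BorelSpace.measurable_eq (α := ℕ → Bool)) ▸ hψ.eventuallyMeasurable, h⟩
end
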